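/- Let d > 1, n₁ > 1 and n₂ > 1 be positive integers, let a_{11}, a_{12}, a_{21}, a_{22} be holomorphic function germs at the origin of ℂ², and let f = (f₁,f₂) ∈ 𝒪(ℂ²,0,0) be given by f₁(x₁,x₂) = x₁^{dn₁+1}a_{11}(x₁,x₂) + x₁^{n₁+1}x₂^{n₂}·O(1) + x₁x₂^{dn₂}·O(1) + x₂^{2dn₂+1}a_{12}(x₁,x₂) and f₂(x₁,x₂) = x₁^{dn₁}x₂·O(1) + x₁^{n₁}x₂^{n₂+1}·O(1) + x₂^{dn₂+1}a_{22}(x₁,x₂) + x₁^{2dn₁+1}a_{21}(x₁,x₂). If the origin is an isolated zero of f, then π_f(0) ≥ 2dn₁n₂ + dn₁ + dn₂ + 1. -/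

import Mathlib

open Metric Set Filter Topology Polynomial Asymptotics
open scoped Classical

noncomputable section

namespace ZhangPaper

/-- `ℂⁿ`. -/
abbrev Cn (n : ℕ) := Fin n → ℂ

variable {n : ℕ}

/-- A germ in `𝒪(ℂⁿ,0,0)`: holomorphic near `0` and fixing the origin. -/
def IsGerm (f : Cn n → Cn n) : Prop := AnalyticAt ℂ f 0 ∧ f 0 = 0

/-- `q` is a regular value of `h` on `s`. -/
def IsRegularValueOn (h : Cn n → Cn n) (s : Set (Cn n)) (q : Cn n) : Prop :=
  ∀ x ∈ s, h x = q → Function.Bijective (fderiv ℂ h x)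

/-- `m` is the zero order (multiplicity) of `h` at the isolated zero `p`:
the number of solutions of `h x = q` near `p`, for any regular value `q`
with `‖q‖` sufficiently small. -/
def HasZeroOrder (h : Cn n → Cn n) (p : Cn n) (m : ℕ) : Prop :=
  ∃ r > 0, AnalyticOnNhd ℂ h (closedBall p r) ∧ h p = 0 ∧
    (∀ x ∈ closedBall p r, h x = 0 → x = p) ∧
    (∀ ε > 0, ∃ q : Cn n, ‖q‖ < ε ∧ IsRegularValueOn h (ball p r) q) ∧
    ∃ δ > 0, ∀ q : Cn n, ‖q‖ < δ → IsRegularValueOn h (ball p r) q →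
      {x ∈ ball p r | h x = q}.ncard = m

/-- The zero order `π_h(p)` of `h` at `p`. -/
def zeroOrder (h : Cn n → Cn n) (p : Cn n) : ℕ := sInf {m | HasZeroOrder h p m}

/-- The fixed point index `μ_g(p)` of `g` at `p`. -/
def fixedPointIndex (g : Cn n → Cn n) (p : Cn n) : ℕ :=
  zeroOrder (fun x => x - g x) p

/-- The local Dold index `P_M(f,0)`. -/
def doldIndex (f : Cn n → Cn n) (M : ℕ) : ℤ :=
  ∑ τ ∈ M.primeFactors.powerset,
    (-1 : ℤ) ^ τ.card * (fixedPointIndex (f^[M / (∏ p ∈ τ, p)]) 0 : ℤ)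

/-- `x` is a periodic point of exact period `M` for `g`. -/
def ExactPeriodicPt (g : Cn n → Cn n) (M : ℕ) (x : Cn n) : Prop :=
  g^[M] x = x ∧ ∀ j, 0 < j → j < M → g^[j] x ≠ x

/-- `g` has at least `m` distinct periodic orbits of period `M` inside `B`. -/
def AtLeastOrbits (g : Cn n → Cn n) (M m : ℕ) (B : Set (Cn n)) : Prop :=
  ∃ p : Fin m → Cn n,
    (∀ i, ExactPeriodicPt g M (p i) ∧ ∀ j < M, g^[j] (p i) ∈ B) ∧
    ∀ i j : Fin m, i ≠ j → ∀ l < M, g^[l] (p i) ≠ p j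

/-- `g` has exactly `m` distinct periodic orbits of period `M` inside `B`. -/
def ExactlyOrbits (g : Cn n → Cn n) (M m : ℕ) (B : Set (Cn n)) : Prop :=
  AtLeastOrbits g M m B ∧ ¬ AtLeastOrbits g M (m + 1) B

/-- The number `𝒪_M(f,0)` of periodic orbits of period `M` of `f` hidden at the
fixed point `0`: the largest `m` such that there is a ball `B` centered at `0` in which
`0` is the only fixed point of `f^M`, and a sequence of holomorphic maps fixing `0`
converging to `f` uniformly on `B`, each having `m` distinct periodic orbits of
period `M` in `B`. -/
def hiddenOrbits (f : Cn n → Cn n) (M : ℕ) : ℕ :=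
  sSup {m | ∃ r > 0,
    (∀ x ∈ closedBall (0 : Cn n) r, f^[M] x = x → x = 0) ∧
    ∃ fk : ℕ → Cn n → Cn n,
      (∀ k, AnalyticOnNhd ℂ (fk k) (ball (0 : Cn n) r) ∧ fk k 0 = 0) ∧
      TendstoUniformlyOn fk f atTop (ball (0 : Cn n) r) ∧
      ∀ k, AtLeastOrbits (fk k) M m (ball (0 : Cn n) r)}

/-- `0` is an isolated fixed point of `g`. -/
def IsolatedFixedPtAt0 (g : Cn n → Cn n) : Prop :=
  g 0 = 0 ∧ ∀ᶠ x in 𝓝[≠] (0 : Cn n), g x ≠ x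

/-- `0` is an isolated zero of `h`. -/
def IsolatedZeroAt0 (h : Cn n → Cn n) : Prop :=
  h 0 = 0 ∧ ∀ᶠ x in 𝓝[≠] (0 : Cn n), h x ≠ 0

/-- `p` is a simple fixed point of `g`: `Dg(p)` has no eigenvalue `1`. -/
def SimpleFixedPt (g : Cn n → Cn n) (p : Cn n) : Prop :=
  g p = p ∧ ¬ Module.End.HasEigenvalue ((fderiv ℂ g p).toLinearMap) 1

/-- The global fixed point index `L(g)` of `g` over `U`: the sum of the fixed point
indices at all fixed points of `g` in `U`. -/
def globalIndex (g : Cn n → Cn n) (U : Set (Cn n)) : ℤ :=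
  ∑ᶠ p ∈ {x ∈ U | g x = x}, (fixedPointIndex g p : ℤ)

/-- The global Dold index `P_M(f)` over `U`. -/
def globalDold (f : Cn n → Cn n) (M : ℕ) (U : Set (Cn n)) : ℤ :=
  ∑ τ ∈ M.primeFactors.powerset,
    (-1 : ℤ) ^ τ.card * globalIndex (f^[M / (∏ p ∈ τ, p)]) U

section Helpers

open MeasureTheory ComplexConjugate


theorem integral_fderiv_zero (G : Cn 2 → ℂ) (hG : ContDiff ℝ 1 G) (hc : HasCompactSupport G)
    (e : Cn 2) : ∫ x, fderiv ℝ G x e = 0 := by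
  have h1 : Continuous fun x => fderiv ℝ G x e := by
    have := hG.continuous_fderiv (by norm_num)
    fun_prop
  have h2 : HasCompactSupport fun x => fderiv ℝ G x e := by
    have := hc.fderiv (𝕜 := ℝ)
    exact this.comp_left (g := fun L : Cn 2 →L[ℝ] ℂ => L e) (by simp)
  have := integral_mul_fderiv_eq_neg_fderiv_mul_of_integrable (μ := (volume : Measure (Cn 2)))
    (𝕜 := ℂ) (f := fun _ => (1:ℂ)) (g := G) (v := e) (by simp)
    (by simpa using h1.integrable_of_hasCompactSupport h2)
    (by simpa using hG.continuous.integrable_of_hasCompactSupport hc)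
    (by intro x _; exact differentiableAt_const _)
    (by intro x _; exact (hG.differentiable (by norm_num)) x)
  simpa using this

/-- complex partial derivative of a scalar function -/
def pd (j : Fin 2) (F : Cn 2 → ℂ) (x : Cn 2) : ℂ := fderiv ℂ F x (Pi.single j 1)

theorem pd_analytic {F : Cn 2 → ℂ} {x : Cn 2} (hF : AnalyticAt ℂ F x) (j : Fin 2) :
    AnalyticAt ℂ (pd j F) x := by
  have h1 := hF.fderiv
  exact (ContinuousLinearMap.apply ℂ ℂ (Pi.single j 1 : Cn 2)).analyticAt _ |>.comp h1

theorem pd_symm {F : Cn 2 → ℂ} {x : Cn 2} (hF : AnalyticAt ℂ F x) :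
    pd 0 (pd 1 F) x = pd 1 (pd 0 F) x := by
  have h1 := hF.fderiv.differentiableAt
  have key : ∀ i j : Fin 2, pd i (pd j F) x
      = fderiv ℂ (fderiv ℂ F) x (Pi.single i 1) (Pi.single j 1) := by
    intro i j
    have : pd j F = fun y => fderiv ℂ F y (Pi.single j 1) := rfl
    rw [pd, this, fderiv_clm_apply h1 (by fun_prop)]
    simp
  rw [key, key]
  have hs : IsSymmSndFDerivAt ℂ F x := by
    apply ContDiffAt.isSymmSndFDerivAt (n := 2) (hF.contDiffAt) 
    simp
  exact hs _ _

theorem dirG {φ : Cn 2 → ℝ} {h : Cn 2 → Cn 2} {J H : Cn 2 → ℂ} {x : Cn 2}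
    (hφ : DifferentiableAt ℝ φ (h x)) (hh : DifferentiableAt ℂ h x)
    (hJ : DifferentiableAt ℂ J x) (hH : DifferentiableAt ℂ H x) (e : Cn 2) :
    fderiv ℝ (fun y => (φ (h y) : ℂ) * (conj (J y) * H y)) x e =
      (fderiv ℝ φ (h x) (fderiv ℂ h x e) : ℂ) * (conj (J x) * H x) +
      (φ (h x) : ℂ) * (conj (fderiv ℂ J x e) * H x + conj (J x) * fderiv ℂ H x e) := by
  have a1 : HasFDerivAt h ((fderiv ℂ h x).restrictScalars ℝ) x :=
    hh.hasFDerivAt.restrictScalars ℝ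
  have a2 : HasFDerivAt J ((fderiv ℂ J x).restrictScalars ℝ) x :=
    hJ.hasFDerivAt.restrictScalars ℝ
  have a3 : HasFDerivAt H ((fderiv ℂ H x).restrictScalars ℝ) x :=
    hH.hasFDerivAt.restrictScalars ℝ
  have a4 := Complex.ofRealCLM.hasFDerivAt.comp x (hφ.hasFDerivAt.comp x a1)
  have a5 := (Complex.conjCLE : ℂ →L[ℝ] ℂ).hasFDerivAt.comp x a2
  have a6 := a4.mul (a5.mul a3)
  have a7 : HasFDerivAt (fun y => (φ (h y) : ℂ) * (conj (J y) * H y)) _ x := a6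
  rw [a7.fderiv]
  simp
  ring

def Jc (h : Cn 2 → Cn 2) (x : Cn 2) : ℂ :=
  pd 0 (fun y => h y 0) x * pd 1 (fun y => h y 1) x
    - pd 1 (fun y => h y 0) x * pd 0 (fun y => h y 1) x

def Jc' (h g : Cn 2 → Cn 2) (x : Cn 2) : ℂ :=
  pd 0 (fun y => g y 0) x * pd 1 (fun y => h y 1) x
    - pd 1 (fun y => g y 0) x * pd 0 (fun y => h y 1) x
  + (pd 0 (fun y => h y 0) x * pd 1 (fun y => g y 1) x
    - pd 1 (fun y => h y 0) x * pd 0 (fun y => g y 1) x)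

def H0 (h g : Cn 2 → Cn 2) (x : Cn 2) : ℂ :=
  pd 1 (fun y => h y 1) x * g x 0 - pd 1 (fun y => h y 0) x * g x 1

def H1 (h g : Cn 2 → Cn 2) (x : Cn 2) : ℂ :=
  pd 0 (fun y => h y 0) x * g x 1 - pd 0 (fun y => h y 1) x * g x 0

theorem coord_analytic {h : Cn 2 → Cn 2} {x : Cn 2} (hh : AnalyticAt ℂ h x) (i : Fin 2) :
    AnalyticAt ℂ (fun y => h y i) x :=
  (ContinuousLinearMap.proj (R := ℂ) (φ := fun _ : Fin 2 => ℂ) i).analyticAt _ |>.comp hh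

theorem Jc_analytic {h : Cn 2 → Cn 2} {x : Cn 2} (hh : AnalyticAt ℂ h x) :
    AnalyticAt ℂ (Jc h) x := by
  have := fun i j => pd_analytic (coord_analytic hh i) j
  exact ((this 0 0).mul (this 1 1)).sub ((this 0 1).mul (this 1 0))

theorem Jc'_analytic {h g : Cn 2 → Cn 2} {x : Cn 2} (hh : AnalyticAt ℂ h x)
    (hg : AnalyticAt ℂ g x) : AnalyticAt ℂ (Jc' h g) x := by
  have := fun i j => pd_analytic (coord_analytic hh i) j
  have t := fun i j => pd_analytic (coord_analytic hg i) j
  exact (((t 0 0).mul (this 1 1)).sub ((t 0 1).mul (this 1 0))).add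
    (((this 0 0).mul (t 1 1)).sub ((this 0 1).mul (t 1 0)))

theorem H0_analytic {h g : Cn 2 → Cn 2} {x : Cn 2} (hh : AnalyticAt ℂ h x)
    (hg : AnalyticAt ℂ g x) : AnalyticAt ℂ (H0 h g) x := by
  have := fun i j => pd_analytic (coord_analytic hh i) j
  exact (((this 1 1).mul (coord_analytic hg 0)).sub ((this 0 1).mul (coord_analytic hg 1)))

theorem H1_analytic {h g : Cn 2 → Cn 2} {x : Cn 2} (hh : AnalyticAt ℂ h x)
    (hg : AnalyticAt ℂ g x) : AnalyticAt ℂ (H1 h g) x := by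
  have := fun i j => pd_analytic (coord_analytic hh i) j
  exact (((this 0 0).mul (coord_analytic hg 1)).sub ((this 1 0).mul (coord_analytic hg 0)))

theorem pd_mul {F G : Cn 2 → ℂ} {x : Cn 2} (hF : AnalyticAt ℂ F x) (hG : AnalyticAt ℂ G x)
    (j : Fin 2) : pd j (fun y => F y * G y) x = F x * pd j G x + G x * pd j F x := by
  unfold pd
  rw [fderiv_fun_mul hF.differentiableAt hG.differentiableAt]
  simp

theorem pd_sub {F G : Cn 2 → ℂ} {x : Cn 2} (hF : AnalyticAt ℂ F x) (hG : AnalyticAt ℂ G x)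
    (j : Fin 2) : pd j (fun y => F y - G y) x = pd j F x - pd j G x := by
  unfold pd
  rw [fderiv_fun_sub hF.differentiableAt hG.differentiableAt]
  simp

theorem div_H {h g : Cn 2 → Cn 2} {x : Cn 2} (hh : AnalyticAt ℂ h x)
    (hg : AnalyticAt ℂ g x) : pd 0 (H0 h g) x + pd 1 (H1 h g) x = Jc' h g x := by
  have a := fun i j => pd_analytic (coord_analytic hh i) j
  have b := fun i => coord_analytic hg i
  have e0 : H0 h g = fun x => (fun x => pd 1 (fun y => h y 1) x * g x 0) x
    - (fun x => pd 1 (fun y => h y 0) x * g x 1) x := rfl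
  have e1 : H1 h g = fun x => (fun x => pd 0 (fun y => h y 0) x * g x 1) x
    - (fun x => pd 0 (fun y => h y 1) x * g x 0) x := rfl
  rw [e0, e1, pd_sub (F := fun x => pd 1 (fun y => h y 1) x * g x 0)
      (G := fun x => pd 1 (fun y => h y 0) x * g x 1) ((a 1 1).mul (b 0)) ((a 0 1).mul (b 1)),
    pd_sub (F := fun x => pd 0 (fun y => h y 0) x * g x 1)
      (G := fun x => pd 0 (fun y => h y 1) x * g x 0)
      ((a 0 0).mul (b 1)) ((a 1 0).mul (b 0)), pd_mul (a 1 1) (b 0), pd_mul (a 0 1) (b 1),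
    pd_mul (a 0 0) (b 1), pd_mul (a 1 0) (b 0), pd_symm (coord_analytic hh 0),
    pd_symm (coord_analytic hh 1)]
  unfold Jc'
  ring

theorem fderiv_coord {h : Cn 2 → Cn 2} {x : Cn 2} (hh : AnalyticAt ℂ h x) (v : Cn 2) (i : Fin 2) :
    fderiv ℂ h x v i = v 0 * pd 0 (fun y => h y i) x + v 1 * pd 1 (fun y => h y i) x := by
  have h2 : fderiv ℂ (fun y => h y i) x = 
    (ContinuousLinearMap.proj (R := ℂ) (φ := fun _ : Fin 2 => ℂ) i).comp (fderiv ℂ h x) := by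
    have := (ContinuousLinearMap.proj (R := ℂ) (φ := fun _ : Fin 2 => ℂ) i).hasFDerivAt.comp x
      hh.differentiableAt.hasFDerivAt
    exact this.fderiv
  have h3 : v = v 0 • Pi.single 0 1 + v 1 • Pi.single 1 1 := by
    ext k; fin_cases k <;> simp
  unfold pd
  rw [h2]
  conv_lhs => rw [h3]
  simp

theorem fderiv_H {h g : Cn 2 → Cn 2} {x : Cn 2} (hh : AnalyticAt ℂ h x) (c : ℂ) :
    fderiv ℂ h x ((c * H0 h g x) • Pi.single 0 1 + (c * H1 h g x) • Pi.single 1 1)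
      = (c * Jc h x) • g x := by
  ext i
  rw [fderiv_coord hh]
  fin_cases i <;> simp [H0, H1, Jc] <;> ring

/-- pointwise divergence identity -/
theorem pointwise_div {φ : Cn 2 → ℝ} {h g : Cn 2 → Cn 2} {x : Cn 2}
    (hφ : DifferentiableAt ℝ φ (h x)) (hh : AnalyticAt ℂ h x) (hg : AnalyticAt ℂ g x) :
    (fderiv ℝ (fun y => (φ (h y) : ℂ) * (conj (Jc h y) * H0 h g y)) x (Pi.single 0 1)).re
    + (fderiv ℝ (fun y => (φ (h y) : ℂ) * (conj (Jc h y) * H1 h g y)) x (Pi.single 1 1)).re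
    + (fderiv ℝ (fun y => (φ (h y) : ℂ) * (conj (Jc h y) * H0 h g y)) x
        (Complex.I • Pi.single 0 1)).im
    + (fderiv ℝ (fun y => (φ (h y) : ℂ) * (conj (Jc h y) * H1 h g y)) x
        (Complex.I • Pi.single 1 1)).im
    = fderiv ℝ φ (h x) (g x) * Complex.normSq (Jc h x)
      + φ (h x) * (2 * (conj (Jc h x) * Jc' h g x).re) := by
  have dJ := (Jc_analytic hh).differentiableAt
  have d0 := (H0_analytic hh hg).differentiableAt
  have d1 := (H1_analytic hh hg).differentiableAt
  rw [dirG hφ hh.differentiableAt dJ d0, dirG hφ hh.differentiableAt dJ d1,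
    dirG hφ hh.differentiableAt dJ d0, dirG hφ hh.differentiableAt dJ d1]
  have key : fderiv ℝ φ (h x) (g x) * Complex.normSq (Jc h x) =
      fderiv ℝ φ (h x) (fderiv ℂ h x (Pi.single 0 1)) * (conj (Jc h x) * H0 h g x).re
      + fderiv ℝ φ (h x) (fderiv ℂ h x (Complex.I • Pi.single 0 1)) * (conj (Jc h x) * H0 h g x).im
      + fderiv ℝ φ (h x) (fderiv ℂ h x (Pi.single 1 1)) * (conj (Jc h x) * H1 h g x).re
      + fderiv ℝ φ (h x) (fderiv ℂ h x (Complex.I • Pi.single 1 1))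
        * (conj (Jc h x) * H1 h g x).im := by
    have e1 := fderiv_H (g := g) hh (conj (Jc h x))
    rw [Complex.conj_mul'] at e1
    have e2 : ∀ (c : ℂ) (v : Cn 2), c • v = (c.re) • v + (c.im) • (Complex.I • v) := by
      intro c v
      ext k
      simp only [Pi.add_apply, Pi.smul_apply, smul_eq_mul, Complex.real_smul]
      conv_lhs => rw [← Complex.re_add_im c]
      ring
    have e3 : ((‖Jc h x‖:ℂ) ^ 2) • g x = (Complex.normSq (Jc h x)) • g x := by
      ext k
      simp [Complex.normSq_eq_norm_sq]
    rw [e3, e2 (conj (Jc h x) * H0 h g x), e2 (conj (Jc h x) * H1 h g x)] at e1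
    have e4 : ∀ (s : ℝ) (v : Cn 2), fderiv ℂ h x (s • v) = s • fderiv ℂ h x v := by
      intro s v
      exact ((fderiv ℂ h x).restrictScalars ℝ).map_smul s v
    have e5 := congrArg (fderiv ℝ φ (h x)) e1
    simp only [map_add, e4, map_smul, smul_eq_mul] at e5
    simp only [map_smul]
    linarith
  have key2 := div_H hh hg
  rw [key, ← key2]
  have p0 : pd 0 (H0 h g) x = fderiv ℂ (H0 h g) x (Pi.single 0 1) := rfl
  have p1 : pd 1 (H1 h g) x = fderiv ℂ (H1 h g) x (Pi.single 1 1) := rfl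
  rw [p0, p1]
  simp only [map_smul, smul_eq_mul, map_mul, Complex.conj_I]
  simp only [Complex.add_re, Complex.add_im, Complex.mul_re, Complex.mul_im, Complex.ofReal_re,
    Complex.ofReal_im, Complex.I_re, Complex.I_im, Complex.neg_re, Complex.neg_im]
  ring



theorem glue_integral {G : Cn 2 → ℂ} {r : ℝ}
    (hG : ∀ x ∈ closedBall (0 : Cn 2) r, ContDiffAt ℝ 1 G x)
    (h0 : ∀ x : Cn 2, ‖x‖ = r → ∀ᶠ y in 𝓝 x, G y = 0) (e : Cn 2) :
    IntegrableOn (fun x => fderiv ℝ G x e) (ball 0 r) ∧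
    ∫ x in ball (0 : Cn 2) r, fderiv ℝ G x e = 0 := by
  set K : Cn 2 → ℂ := indicator (ball 0 r) G with hK
  have hin : ∀ x ∈ ball (0 : Cn 2) r, K =ᶠ[𝓝 x] G := by
    intro x hx
    filter_upwards [isOpen_ball.mem_nhds hx] with y hy
    simp [hK, indicator_of_mem hy]
  have hout : ∀ x, x ∉ ball (0 : Cn 2) r → K =ᶠ[𝓝 x] fun _ => 0 := by
    intro x hx
    have hx' : r ≤ ‖x‖ := by simpa using hx
    rcases hx'.eq_or_lt with h | h
    · filter_upwards [h0 x h.symm] with y hy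
      simp [hK, indicator, hy]
    · have : ∀ᶠ y in 𝓝 x, r < ‖y‖ := continuous_norm.continuousAt.eventually_const_lt h
      filter_upwards [this] with y hy
      simp only [hK, indicator]
      rw [if_neg]
      simp [hy.le]
  have hKs : ContDiff ℝ 1 K := by
    rw [contDiff_iff_contDiffAt]
    intro x
    by_cases hx : x ∈ ball (0 : Cn 2) r
    · exact (hG x (ball_subset_closedBall hx)).congr_of_eventuallyEq (hin x hx)
    · exact contDiffAt_const.congr_of_eventuallyEq (hout x hx)
  have hc : HasCompactSupport K := by
    apply HasCompactSupport.intro (isCompact_closedBall (0 : Cn 2) r)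
    intro x hx
    have : x ∉ ball (0 : Cn 2) r := fun h => hx (ball_subset_closedBall h)
    simp [hK, indicator_of_notMem this]
  have hint : Integrable (fun x => fderiv ℝ K x e) := by
    have h1 : Continuous fun x => fderiv ℝ K x e := by
      have := hKs.continuous_fderiv (by norm_num)
      fun_prop
    have h2 : HasCompactSupport fun x => fderiv ℝ K x e := by
      have := hc.fderiv (𝕜 := ℝ)
      exact this.comp_left (g := fun L : Cn 2 →L[ℝ] ℂ => L e) (by simp)
    exact h1.integrable_of_hasCompactSupport h2
  have e1 : (fun x => fderiv ℝ K x e) = indicator (ball 0 r) (fun x => fderiv ℝ G x e) := by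
    funext x
    by_cases hx : x ∈ ball (0 : Cn 2) r
    · rw [indicator_of_mem hx, (hin x hx).fderiv_eq]
    · rw [indicator_of_notMem hx, (hout x hx).fderiv_eq]
      simp
  have hz := integral_fderiv_zero K hKs hc e
  rw [e1] at hint hz
  refine ⟨(integrable_indicator_iff measurableSet_ball).1 hint, ?_⟩
  rwa [integral_indicator measurableSet_ball] at hz

theorem analytic_contDiffAt_real {E F : Type*} [NormedAddCommGroup E] [NormedSpace ℂ E]
    [NormedSpace ℝ E] [IsScalarTower ℝ ℂ E]
    [NormedAddCommGroup F] [NormedSpace ℂ F] [NormedSpace ℝ F] [IsScalarTower ℝ ℂ F]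
    [CompleteSpace F] {f : E → F} {x : E}
    (hf : AnalyticAt ℂ f x) : ContDiffAt ℝ 1 f x :=
  (hf.restrictScalars (𝕜 := ℝ)).contDiffAt

theorem div_integral {φ : Cn 2 → ℝ} {h g : Cn 2 → Cn 2} {r ε : ℝ}
    (hφ : ContDiff ℝ 1 φ) (hφ0 : ∀ w, ε ≤ ‖w‖ → φ w = 0)
    (hh : AnalyticOnNhd ℂ h (closedBall 0 r)) (hg : AnalyticOnNhd ℂ g (closedBall 0 r))
    (hs : ∀ x : Cn 2, ‖x‖ = r → ε < ‖h x‖) :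
    ∫ x in ball (0 : Cn 2) r, (fderiv ℝ φ (h x) (g x) * Complex.normSq (Jc h x)
      + φ (h x) * (2 * (conj (Jc h x) * Jc' h g x).re)) = 0 := by
  have hC : ∀ H : Cn 2 → ℂ, AnalyticOnNhd ℂ H (closedBall 0 r) → ∀ e : Cn 2,
      IntegrableOn (fun x => fderiv ℝ (fun y => (φ (h y) : ℂ) * (conj (Jc h y) * H y)) x e)
        (ball 0 r) ∧
      ∫ x in ball (0 : Cn 2) r,
        fderiv ℝ (fun y => (φ (h y) : ℂ) * (conj (Jc h y) * H y)) x e = 0 := by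
    intro H hH e
    apply glue_integral
    · intro x hx
      have a1 := analytic_contDiffAt_real (hh x hx)
      have a2 := analytic_contDiffAt_real (Jc_analytic (hh x hx))
      have a3 := analytic_contDiffAt_real (hH x hx)
      have a4 : ContDiffAt ℝ 1 (fun y => (φ (h y) : ℂ)) x :=
        Complex.ofRealCLM.contDiff.contDiffAt.comp x (hφ.contDiffAt.comp x a1)
      have a5 : ContDiffAt ℝ 1 (fun y => conj (Jc h y)) x :=
        (Complex.conjCLE : ℂ →L[ℝ] ℂ).contDiff.contDiffAt.comp x a2
      exact a4.mul (a5.mul a3)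
    · intro x hx
      have hxm : x ∈ closedBall (0 : Cn 2) r := by simp [hx]
      have := (hh x hxm).continuousAt.norm.eventually_const_lt (hs x hx)
      filter_upwards [this] with y hy
      simp [hφ0 _ hy.le]
  have A0 : AnalyticOnNhd ℂ (H0 h g) (closedBall 0 r) := fun x hx =>
    H0_analytic (hh x hx) (hg x hx)
  have A1 : AnalyticOnNhd ℂ (H1 h g) (closedBall 0 r) := fun x hx =>
    H1_analytic (hh x hx) (hg x hx)
  have i1 := hC _ A0 (Pi.single 0 1)
  have i2 := hC _ A1 (Pi.single 1 1)
  have i3 := hC _ A0 (Complex.I • Pi.single 0 1)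
  have i4 := hC _ A1 (Complex.I • Pi.single 1 1)
  have e : ∀ x ∈ ball (0 : Cn 2) r, _ := fun x hx =>
    (pointwise_div (hφ.differentiable (by norm_num) (h x))
    (hh x (ball_subset_closedBall hx)) (hg x (ball_subset_closedBall hx)))
  rw [← setIntegral_congr_fun measurableSet_ball e]
  have rr : ∀ {K : Cn 2 → ℂ}, IntegrableOn K (ball 0 r) ∧ ∫ x in ball (0 : Cn 2) r, K x = 0 →
      IntegrableOn (fun x => (K x).re) (ball 0 r) ∧ ∫ x in ball (0 : Cn 2) r, (K x).re = 0 := by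
    intro K hK
    refine ⟨hK.1.re, ?_⟩
    have := integral_re (𝕜 := ℂ) hK.1
    simp only [RCLike.re_to_complex] at this
    rw [this, hK.2]; simp
  have ri : ∀ {K : Cn 2 → ℂ}, IntegrableOn K (ball 0 r) ∧ ∫ x in ball (0 : Cn 2) r, K x = 0 →
      IntegrableOn (fun x => (K x).im) (ball 0 r) ∧ ∫ x in ball (0 : Cn 2) r, (K x).im = 0 := by
    intro K hK
    refine ⟨hK.1.im, ?_⟩
    have := integral_im (𝕜 := ℂ) hK.1
    simp only [RCLike.im_to_complex] at this
    rw [this, hK.2]; simp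
  have j1 := rr i1
  have j2 := rr i2
  have j3 := ri i3
  have j4 := ri i4
  have hIadd : ∀ {K M : Cn 2 → ℝ},
      (IntegrableOn K (ball 0 r) ∧ ∫ x in ball (0 : Cn 2) r, K x = 0) →
      (IntegrableOn M (ball 0 r) ∧ ∫ x in ball (0 : Cn 2) r, M x = 0) →
      IntegrableOn (fun x => K x + M x) (ball 0 r) ∧
        ∫ x in ball (0 : Cn 2) r, (K x + M x) = 0 := by
    intro K M hK hM
    refine ⟨hK.1.add hM.1, ?_⟩
    rw [integral_add hK.1 hM.1, hK.2, hM.2, add_zero]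
  exact (hIadd (hIadd (hIadd j1 j2) j3) j4).2

theorem Jc_add {h g : Cn 2 → Cn 2} {x : Cn 2} (hh : AnalyticAt ℂ h x) (hg : AnalyticAt ℂ g x)
    (t : ℝ) : Jc (fun y => h y + t • g y) x = Jc h x + t * Jc' h g x + t ^ 2 * Jc g x ∧
      Jc' (fun y => h y + t • g y) g x = Jc' h g x + 2 * t * Jc g x := by
  have key : ∀ i j : Fin 2, pd j (fun y => (h y + t • g y) i) x
      = pd j (fun y => h y i) x + t * pd j (fun y => g y i) x := by
    intro i j
    unfold pd
    have h1 := (coord_analytic hh i).differentiableAt.hasFDerivAt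
    have h2 := (coord_analytic hg i).differentiableAt.hasFDerivAt
    have h3 := h1.add (h2.const_mul (t : ℂ))
    have h4 : HasFDerivAt (fun y => (h y + t • g y) i) _ x := h3
    rw [h4.fderiv]
    simp
  unfold Jc Jc'
  simp only [key]
  constructor <;> ring

theorem degree_const {φ : Cn 2 → ℝ} {h g : Cn 2 → Cn 2} {r ε : ℝ}
    (hφ : ContDiff ℝ 1 φ) (hφ0 : ∀ w, ε ≤ ‖w‖ → φ w = 0)
    (hh : AnalyticOnNhd ℂ h (closedBall 0 r)) (hg : AnalyticOnNhd ℂ g (closedBall 0 r))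
    (hs : ∀ t ∈ Icc (0:ℝ) 1, ∀ x : Cn 2, ‖x‖ = r → ε < ‖h x + t • g x‖) :
    ∫ x in ball (0 : Cn 2) r, φ (h x + g x) * Complex.normSq (Jc (fun y => h y + g y) x)
    = ∫ x in ball (0 : Cn 2) r, φ (h x) * Complex.normSq (Jc h x) := by
  set Q : ℝ → Cn 2 → ℂ := fun t x => Jc h x + t * Jc' h g x + t ^ 2 * Jc g x with hQ
  set F : ℝ → Cn 2 → ℝ := fun t x => φ (h x + t • g x) * Complex.normSq (Q t x) with hF
  set F' : ℝ → Cn 2 → ℝ := fun t x => fderiv ℝ φ (h x + t • g x) (g x) * Complex.normSq (Q t x)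
    + φ (h x + t • g x) * (2 * (conj (Q t x) * (Jc' h g x + 2 * t * Jc g x)).re) with hF'
  have ch : ContinuousOn h (closedBall 0 r) := hh.continuousOn
  have cg : ContinuousOn g (closedBall 0 r) := hg.continuousOn
  have cA : ContinuousOn (Jc h) (closedBall 0 r) := fun x hx =>
    (Jc_analytic (hh x hx)).continuousAt.continuousWithinAt
  have cB : ContinuousOn (Jc' h g) (closedBall 0 r) := fun x hx =>
    (Jc'_analytic (hh x hx) (hg x hx)).continuousAt.continuousWithinAt
  have cC : ContinuousOn (Jc g) (closedBall 0 r) := fun x hx =>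
    (Jc_analytic (hg x hx)).continuousAt.continuousWithinAt
  have cφ := hφ.continuous
  have cφ' := hφ.continuous_fderiv (by norm_num)
  have s2 : MapsTo (fun p : ℝ × Cn 2 => p.2) (univ ×ˢ closedBall (0 : Cn 2) r) (closedBall 0 r) :=
    fun p hp => hp.2
  have c2 : ContinuousOn (fun p : ℝ × Cn 2 => p.2) (univ ×ˢ closedBall (0 : Cn 2) r) :=
    continuous_snd.continuousOn
  have dh := ch.comp c2 s2
  have dg := cg.comp c2 s2
  have dA := cA.comp c2 s2
  have dB := cB.comp c2 s2
  have dC := cC.comp c2 s2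
  have dt : ContinuousOn (fun p : ℝ × Cn 2 => p.1) (univ ×ˢ closedBall (0 : Cn 2) r) :=
    continuous_fst.continuousOn
  have dtc : ContinuousOn (fun p : ℝ × Cn 2 => (p.1 : ℂ)) (univ ×ˢ closedBall (0 : Cn 2) r) :=
    Complex.continuous_ofReal.comp_continuousOn dt
  have dQ : ContinuousOn (fun p : ℝ × Cn 2 => Q p.1 p.2) (univ ×ˢ closedBall (0 : Cn 2) r) :=
    (dA.add (dtc.mul dB)).add ((dtc.pow 2).mul dC)
  have dhg := dh.add (dt.smul dg)
  have dF : ContinuousOn (fun p : ℝ × Cn 2 => F p.1 p.2) (univ ×ˢ closedBall (0 : Cn 2) r) :=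
    (cφ.comp_continuousOn dhg).mul (Complex.continuous_normSq.comp_continuousOn dQ)
  have dF' : ContinuousOn (fun p : ℝ × Cn 2 => F' p.1 p.2) (univ ×ˢ closedBall (0 : Cn 2) r) :=
    (((cφ'.comp_continuousOn dhg).clm_apply dg).mul
      (Complex.continuous_normSq.comp_continuousOn dQ)).add
    ((cφ.comp_continuousOn dhg).mul (continuousOn_const.mul
      (Complex.continuous_re.comp_continuousOn ((Complex.continuous_conj.comp_continuousOn dQ).mul
        (dB.add ((continuousOn_const.mul dtc).mul dC))))))
  have sl : ∀ (K : ℝ × Cn 2 → ℝ), ContinuousOn K (univ ×ˢ closedBall (0 : Cn 2) r) → ∀ t,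
      ContinuousOn (fun x => K (t, x)) (closedBall 0 r) := fun K hK t =>
    hK.comp (by fun_prop) (fun x hx => ⟨mem_univ _, hx⟩)
  have deriv0 : ∀ t ∈ Icc (0:ℝ) 1,
      HasDerivAt (fun t => ∫ x in ball (0 : Cn 2) r, F t x) 0 t := by
    intro t ht
    obtain ⟨M, hM⟩ := ((isCompact_Icc (a := (-1:ℝ)) (b := 2)).prod
      (isCompact_closedBall (0 : Cn 2) r)).exists_bound_of_continuousOn
        (dF'.mono (prod_mono (subset_univ _) subset_rfl))
    have main := hasDerivAt_integral_of_dominated_loc_of_deriv_le (μ := volume.restrict (ball (0 : Cn 2) r))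
      (F := F) (F' := F') (x₀ := t) (s := Icc (-1:ℝ) 2) (bound := fun _ => M)
      (Icc_mem_nhds (by linarith [ht.1]) (by linarith [ht.2]))
      (Eventually.of_forall fun s => ((sl _ dF s).mono ball_subset_closedBall).aestronglyMeasurable
        measurableSet_ball)
      (((sl _ dF t).integrableOn_compact (isCompact_closedBall _ _)).mono_set
        ball_subset_closedBall)
      (((sl _ dF' t).mono ball_subset_closedBall).aestronglyMeasurable measurableSet_ball)
      (by
        rw [ae_restrict_iff' measurableSet_ball]
        exact Eventually.of_forall fun x hx s hs' => hM (s, x) ⟨hs', ball_subset_closedBall hx⟩)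
      (by
        exact integrableOn_const measure_ball_lt_top.ne (by simp))
      (by
        refine Eventually.of_forall fun x s _ => ?_
        have k1 : HasDerivAt (fun s : ℝ => h x + s • g x) (g x) s := by
          simpa using ((hasDerivAt_id s).smul_const (g x)).const_add (h x)
        have k2 := ((hφ.differentiable (by norm_num)) (h x + s • g x)).hasFDerivAt.comp_hasDerivAt
          s k1
        have k0 : HasDerivAt (fun s : ℝ => (s : ℂ)) 1 s := Complex.ofRealCLM.hasDerivAt
        have k3 : HasDerivAt (fun s : ℝ => Q s x) (Jc' h g x + 2 * s * Jc g x) s := by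
          have := ((k0.mul_const (Jc' h g x)).const_add (Jc h x)).add
            ((k0.pow 2).mul_const (Jc g x))
          refine this.congr_deriv ?_
          simp
        have k4 : HasDerivAt (fun s : ℝ => Complex.normSq (Q s x))
            (2 * (conj (Q s x) * (Jc' h g x + 2 * s * Jc g x)).re) s := by
          have a := Complex.reCLM.hasFDerivAt.comp_hasDerivAt s k3
          have b := Complex.imCLM.hasFDerivAt.comp_hasDerivAt s k3
          have c := (a.mul a).add (b.mul b)
          refine c.congr_deriv ?_
          simp
          ring
        exact k2.mul k4)
    have z : ∫ x in ball (0 : Cn 2) r, F' t x = 0 := by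
      have hht : AnalyticOnNhd ℂ (fun y => h y + t • g y) (closedBall 0 r) := by
        intro x hx
        have e : (fun y => h y + t • g y) = fun y => h y + (t : ℂ) • g y := by
          funext y; ext i; simp
        rw [e]
        exact (hh x hx).add (AnalyticAt.fun_smul analyticAt_const (hg x hx))
      rw [← div_integral (h := fun y => h y + t • g y) hφ hφ0 hht hg (hs t ht)]
      apply setIntegral_congr_fun measurableSet_ball
      intro x hx
      have hx' := ball_subset_closedBall hx
      simp only [hF', hQ, (Jc_add (hh x hx') (hg x hx') t).1, (Jc_add (hh x hx') (hg x hx') t).2]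
    rw [z] at main
    exact main.2
  have hc := constant_of_has_deriv_right_zero (f := fun t => ∫ x in ball (0 : Cn 2) r, F t x)
    (a := 0) (b := 1) (fun t ht => (deriv0 t ht).continuousAt.continuousWithinAt)
    (fun t ht => (deriv0 t (Ico_subset_Icc_self ht)).hasDerivWithinAt) 1 (by simp)
  have e0 : ∀ x ∈ ball (0 : Cn 2) r, F 0 x = φ (h x) * Complex.normSq (Jc h x) := by
    intro x hx; simp [hF, hQ]
  have e1 : ∀ x ∈ ball (0 : Cn 2) r, F 1 x =
      φ (h x + g x) * Complex.normSq (Jc (fun y => h y + g y) x) := by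
    intro x hx
    have hx' := ball_subset_closedBall hx
    have := (Jc_add (hh x hx') (hg x hx') 1).1
    simp only [one_smul] at this
    simp [hF, hQ, this]
  rw [← setIntegral_congr_fun measurableSet_ball e0, ← setIntegral_congr_fun measurableSet_ball e1]
  exact hc



theorem det_fderiv_eq_Jc {h : Cn 2 → Cn 2} {x : Cn 2} (hh : AnalyticAt ℂ h x) :
    LinearMap.det ((fderiv ℂ h x : Cn 2 →L[ℂ] Cn 2) : Cn 2 →ₗ[ℂ] Cn 2) = Jc h x := by
  rw [← LinearMap.det_toMatrix', Matrix.det_fin_two]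
  simp only [LinearMap.toMatrix'_apply, ContinuousLinearMap.coe_coe]
  unfold Jc
  have e' : ∀ i j : Fin 2, (fderiv ℂ h x) (Pi.single j 1) i
      = pd j (fun y => h y i) x := by
    intro i j
    rw [fderiv_coord hh]
    fin_cases j <;> simp
  simp only [e']

theorem bij_iff_Jc {h : Cn 2 → Cn 2} {x : Cn 2} (hh : AnalyticAt ℂ h x) :
    Function.Bijective (fderiv ℂ h x) ↔ Jc h x ≠ 0 := by
  rw [← det_fderiv_eq_Jc hh]
  constructor
  · intro hb
    have h2 := (LinearEquiv.ofBijective ((fderiv ℂ h x : Cn 2 →L[ℂ] Cn 2) : Cn 2 →ₗ[ℂ] Cn 2) hb)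
    have := LinearEquiv.isUnit_det' (LinearEquiv.ofBijective ((fderiv ℂ h x : Cn 2 →L[ℂ] Cn 2) : Cn 2 →ₗ[ℂ] Cn 2) hb)
    exact this.ne_zero
  · intro hd
    have := LinearMap.equivOfDetNeZero _ hd
    exact (LinearMap.equivOfDetNeZero _ hd).bijective

theorem det_real {h : Cn 2 → Cn 2} {x : Cn 2} (hh : AnalyticAt ℂ h x) :
    ((fderiv ℂ h x).restrictScalars ℝ).det = Complex.normSq (Jc h x) := by
  have := LinearMap.det_restrictScalars (R := ℝ) (S := ℂ)
    (f := ((fderiv ℂ h x : Cn 2 →L[ℂ] Cn 2) : Cn 2 →ₗ[ℂ] Cn 2))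
  rw [det_fderiv_eq_Jc hh, Algebra.norm_complex_apply] at this
  exact this

theorem local_inj {h : Cn 2 → Cn 2} {z : Cn 2} (hh : AnalyticAt ℂ h z) (hJ : Jc h z ≠ 0)
    {U : Set (Cn 2)} (hU : U ∈ 𝓝 z) :
    ∃ W ⊆ U, IsOpen W ∧ z ∈ W ∧ InjOn h W ∧ h '' W ∈ 𝓝 (h z) := by
  have hb := (bij_iff_Jc hh).2 hJ
  have hs : HasStrictFDerivAt h (fderiv ℂ h z) z := hh.hasStrictFDerivAt
  set E : Cn 2 ≃L[ℂ] Cn 2 := ContinuousLinearEquiv.ofBijective (fderiv ℂ h z)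
    (LinearMap.ker_eq_bot.2 hb.1) (LinearMap.range_eq_top.2 hb.2) with hE
  have hs' : HasStrictFDerivAt h (E : Cn 2 →L[ℂ] Cn 2) z := by
    have : (E : Cn 2 →L[ℂ] Cn 2) = fderiv ℂ h z := by ext; rfl
    rw [this]; exact hs
  set T := hs'.toOpenPartialHomeomorph h with hT
  have hTc : (T : Cn 2 → Cn 2) = h := hs'.toOpenPartialHomeomorph_coe
  refine ⟨T.source ∩ interior U, fun x hx => interior_subset hx.2, T.open_source.inter isOpen_interior,
    ⟨hs'.mem_toOpenPartialHomeomorph_source, mem_interior_iff_mem_nhds.2 hU⟩, ?_, ?_⟩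
  · have := T.injOn
    rw [hTc] at this
    exact this.mono inter_subset_left
  · have := hs'.map_nhds_eq_of_equiv
    rw [← this]
    apply image_mem_map
    exact (T.open_source.inter isOpen_interior).mem_nhds
      ⟨hs'.mem_toOpenPartialHomeomorph_source, mem_interior_iff_mem_nhds.2 hU⟩

theorem local_integral {h : Cn 2 → Cn 2} {W : Set (Cn 2)} (hW : IsOpen W)
    (hh : AnalyticOnNhd ℂ h W) (hi : InjOn h W) {φ : Cn 2 → ℝ} {ε : ℝ}
    (hφ0 : ∀ w, ε ≤ ‖w‖ → φ w = 0) (hε : ball 0 ε ⊆ h '' W) :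
    ∫ x in W, φ (h x) * Complex.normSq (Jc h x) = ∫ w, φ w := by
  have h1 := integral_image_eq_integral_abs_det_fderiv_smul (volume : Measure (Cn 2))
    hW.measurableSet (f := h) (f' := fun x => (fderiv ℂ h x).restrictScalars ℝ)
    (fun x hx => ((hh x hx).differentiableAt.hasFDerivAt.restrictScalars ℝ).hasFDerivWithinAt)
    hi φ
  have h2 : ∫ w in h '' W, φ w = ∫ w, φ w := by
    apply setIntegral_eq_integral_of_forall_compl_eq_zero
    intro w hw
    apply hφ0
    by_contra hc
    exact hw (hε (by simpa using hc))
  rw [← h2, h1]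
  apply setIntegral_congr_fun hW.measurableSet
  intro x hx
  simp only [det_real (hh x hx), smul_eq_mul, abs_of_nonneg (Complex.normSq_nonneg _)]
  ring

theorem compact_pos {X : Type*} [TopologicalSpace X] {K : Set X} (hK : IsCompact K) {f : X → ℝ}
    (hf : ContinuousOn f K) (hp : ∀ x ∈ K, 0 < f x) : ∃ c > 0, ∀ x ∈ K, c ≤ f x := by
  rcases K.eq_empty_or_nonempty with h | h
  · exact ⟨1, one_pos, by simp [h]⟩
  · obtain ⟨x, hx, hm⟩ := hK.exists_isMinOn h hf
    exact ⟨f x, hp x hx, fun y hy => hm hy⟩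

theorem count_integral {h : Cn 2 → Cn 2} {r : ℝ} (hh : AnalyticOnNhd ℂ h (closedBall 0 r))
    (Z : Finset (Cn 2))
    (hZ : ∀ z ∈ Z, z ∈ ball 0 r ∧ h z = 0 ∧ Jc h z ≠ 0) :
    ∀ᶠ ε in 𝓝[>] (0:ℝ), ∀ φ : Cn 2 → ℝ, Continuous φ → (∀ w, 0 ≤ φ w) →
      (∀ w, ε ≤ ‖w‖ → φ w = 0) →
      (Z.card * ∫ w, φ w ≤ ∫ x in ball (0 : Cn 2) r, φ (h x) * Complex.normSq (Jc h x)) ∧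
      ((∀ x ∈ closedBall (0 : Cn 2) r, h x = 0 → x ∈ Z) →
        Z.card * ∫ w, φ w = ∫ x in ball (0 : Cn 2) r, φ (h x) * Complex.normSq (Jc h x)) := by
  obtain ⟨U, hU, hd⟩ := Z.finite_toSet.t2_separation
  have hloc : ∀ z ∈ Z, ∃ W ⊆ U z ∩ ball 0 r, IsOpen W ∧ z ∈ W ∧ InjOn h W ∧ h '' W ∈ 𝓝 (h z) := by
    intro z hz
    obtain ⟨h1, h2, h3⟩ := hZ z hz
    exact local_inj (hh z (ball_subset_closedBall h1)) h3
      (((hU z).2.inter isOpen_ball).mem_nhds ⟨(hU z).1, h1⟩)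
  choose! W hWU hWo hWz hWi hWn using hloc
  have hev : ∀ᶠ ε in 𝓝[>] (0:ℝ), ∀ z ∈ Z, ball 0 ε ⊆ h '' W z := by
    rw [Filter.eventually_all_finset]
    intro z hz
    have := hWn z hz
    rw [(hZ z hz).2.1] at this
    obtain ⟨δ, hδ, hδs⟩ := Metric.mem_nhds_iff.1 this
    filter_upwards [Ioo_mem_nhdsGT hδ] with ε hε
    exact (ball_subset_ball hε.2.le).trans hδs
  have hdis : (Z : Set (Cn 2)).PairwiseDisjoint W := by
    intro a ha b hb hab
    exact (hd ha hb hab).mono (fun x hx => (hWU a ha hx).1) (fun x hx => (hWU b hb hx).1)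
  set V := ⋃ z ∈ Z, W z with hV
  have hVo : IsOpen V := isOpen_biUnion fun z hz => hWo z hz
  have hVb : V ⊆ ball 0 r := iUnion₂_subset fun z hz x hx => (hWU z hz hx).2
  have hcov : ∃ c > 0, ∀ x ∈ closedBall (0 : Cn 2) r \ V,
      (∀ x ∈ closedBall (0 : Cn 2) r, h x = 0 → x ∈ Z) → c ≤ ‖h x‖ := by
    by_cases hall : ∀ x ∈ closedBall (0 : Cn 2) r, h x = 0 → x ∈ Z
    · obtain ⟨c, hc, hcc⟩ := compact_pos ((isCompact_closedBall (0 : Cn 2) r).diff hVo)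
        (f := fun x => ‖h x‖) (hh.continuousOn.norm.mono diff_subset) (by
          intro x hx
          rw [norm_pos_iff]
          intro h0
          have := hall x hx.1 h0
          exact hx.2 (mem_biUnion this (hWz x this)))
      exact ⟨c, hc, fun x hx _ => hcc x hx⟩
    · exact ⟨1, one_pos, fun x _ h => absurd h hall⟩
  obtain ⟨c, hc, hcc⟩ := hcov
  filter_upwards [hev, Ioo_mem_nhdsGT hc] with ε hε hεc φ hφ hφn hφ0
  have cont : ContinuousOn (fun x => φ (h x) * Complex.normSq (Jc h x)) (closedBall 0 r) := by
    have cA : ContinuousOn (Jc h) (closedBall 0 r) := fun x hx =>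
      (Jc_analytic (hh x hx)).continuousAt.continuousWithinAt
    exact (hφ.comp_continuousOn hh.continuousOn).mul (Complex.continuous_normSq.comp_continuousOn cA)
  have int : IntegrableOn (fun x => φ (h x) * Complex.normSq (Jc h x)) (ball 0 r) :=
    (cont.integrableOn_compact (isCompact_closedBall _ _)).mono_set ball_subset_closedBall
  have e1 : ∫ x in V, φ (h x) * Complex.normSq (Jc h x) = Z.card * ∫ w, φ w := by
    rw [hV, integral_biUnion_finset Z (fun z hz => (hWo z hz).measurableSet) hdis
      (fun z hz => int.mono_set fun x hx => (hWU z hz hx).2)]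
    rw [Finset.sum_congr rfl fun z hz => local_integral (hWo z hz)
      (fun x hx => hh x (ball_subset_closedBall (hWU z hz hx).2)) (hWi z hz) hφ0 (hε z hz)]
    simp
  rw [← e1]
  refine ⟨?_, ?_⟩
  · apply setIntegral_mono_set int
    · exact Eventually.of_forall fun x => mul_nonneg (hφn _) (Complex.normSq_nonneg _)
    · exact hVb.eventuallyLE
  · intro hall
    symm
    apply setIntegral_eq_of_subset_of_forall_diff_eq_zero measurableSet_ball hVb
    intro x hx
    have := hcc x ⟨ball_subset_closedBall hx.1, hx.2⟩ hall
    rw [hφ0 _ (hεc.2.le.trans this), zero_mul]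

theorem zeros_finite {h : Cn 2 → Cn 2} {r : ℝ} (hh : AnalyticOnNhd ℂ h (closedBall 0 r))
    (hreg : ∀ x ∈ closedBall (0 : Cn 2) r, h x = 0 → Jc h x ≠ 0) :
    {x ∈ closedBall (0 : Cn 2) r | h x = 0}.Finite := by
  have hl : ∀ x ∈ closedBall (0 : Cn 2) r, ∃ V ∈ 𝓝 x, ∀ y ∈ V, h y = 0 → y = x := by
    intro x hx
    by_cases h0 : h x = 0
    · obtain ⟨W, -, hWo, hxW, hWi, -⟩ := local_inj (hh x hx) (hreg x hx h0) univ_mem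
      exact ⟨W, hWo.mem_nhds hxW, fun y hy hy0 => hWi hy hxW (by rw [hy0, h0])⟩
    · have := (hh x hx).continuousAt.eventually_ne h0
      exact ⟨_, this, fun y hy hy0 => absurd hy0 hy⟩
  choose! V hV hVz using hl
  obtain ⟨t, ht, hcov⟩ := (isCompact_closedBall (0 : Cn 2) r).elim_nhds_subcover V hV
  apply t.finite_toSet.subset
  intro y hy
  obtain ⟨x, hx, hyx⟩ := mem_iUnion₂.1 (hcov hy.1)
  rw [hVz x (ht x hx) y hyx hy.2]
  exact hx

theorem deg_le {h₀ h₁ : Cn 2 → Cn 2} {r : ℝ}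
    (a₀ : AnalyticOnNhd ℂ h₀ (closedBall 0 r)) (a₁ : AnalyticOnNhd ℂ h₁ (closedBall 0 r))
    (hb : ∀ t ∈ Icc (0:ℝ) 1, ∀ x : Cn 2, ‖x‖ = r → h₀ x + t • (h₁ x - h₀ x) ≠ 0)
    (Z : Finset (Cn 2)) (hZ : ∀ z ∈ Z, z ∈ ball 0 r ∧ h₁ z = 0 ∧ Jc h₁ z ≠ 0)
    (hreg : ∀ x ∈ ball (0 : Cn 2) r, h₀ x = 0 → Jc h₀ x ≠ 0) :
    {x ∈ ball (0 : Cn 2) r | h₀ x = 0}.Finite ∧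
    Z.card ≤ {x ∈ ball (0 : Cn 2) r | h₀ x = 0}.ncard := by
  have hcb : ∀ x ∈ closedBall (0 : Cn 2) r, h₀ x = 0 → x ∈ ball (0 : Cn 2) r := by
    intro x hx h0
    by_contra hc
    have hxr : ‖x‖ = r := le_antisymm (by simpa using hx) (by simpa using hc)
    exact hb 0 (by simp) x hxr (by simp [h0])
  have hfin : {x ∈ ball (0 : Cn 2) r | h₀ x = 0}.Finite :=
    (zeros_finite a₀ fun x hx h0 => hreg x (hcb x hx h0) h0).subset
    (fun x hx => ⟨ball_subset_closedBall hx.1, hx.2⟩)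
  refine ⟨hfin, ?_⟩
  have ag : AnalyticOnNhd ℂ (fun x => h₁ x - h₀ x) (closedBall 0 r) :=
    fun x hx => (a₁ x hx).sub (a₀ x hx)
  obtain ⟨c, hc, hcc⟩ : ∃ c > 0, ∀ p ∈ Icc (0:ℝ) 1 ×ˢ sphere (0 : Cn 2) r,
      c ≤ ‖h₀ p.2 + p.1 • (h₁ p.2 - h₀ p.2)‖ := by
    apply compact_pos (isCompact_Icc.prod (isCompact_sphere _ _))
    · have m : MapsTo (fun p : ℝ × Cn 2 => p.2) (Icc (0:ℝ) 1 ×ˢ sphere (0 : Cn 2) r)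
        (closedBall 0 r) := fun p hp => sphere_subset_closedBall hp.2
      have c0 := a₀.continuousOn.comp continuous_snd.continuousOn m
      have c1 := ag.continuousOn.comp continuous_snd.continuousOn m
      exact (c0.add (continuous_fst.continuousOn.smul c1)).norm
    · intro p hp
      rw [norm_pos_iff]
      exact hb p.1 hp.1 p.2 (by simpa using hp.2)
  have ev0 := count_integral a₀ hfin.toFinset (by
    intro z hz
    rw [Set.Finite.mem_toFinset] at hz
    exact ⟨hz.1, hz.2, hreg z hz.1 hz.2⟩)
  have ev1 := count_integral a₁ Z hZ
  obtain ⟨ε, ⟨h0, h1⟩, hε⟩ := ((ev0.and ev1).and (Ioo_mem_nhdsGT hc)).exists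
  let φ : ContDiffBump (0 : Cn 2) := ⟨ε / 2, ε, by linarith [hε.1], by linarith [hε.1]⟩
  have z : ∀ w, ε ≤ ‖w‖ → φ w = 0 := by
    intro w hw
    exact φ.zero_of_le_dist (by simpa using hw)
  obtain ⟨-, h0⟩ := h0 φ φ.continuous (fun w => φ.nonneg) z
  obtain ⟨h1, -⟩ := h1 φ φ.continuous (fun w => φ.nonneg) z
  have h0 := h0 (by
    intro x hx h0
    rw [Set.Finite.mem_toFinset]
    exact ⟨hcb x hx h0, h0⟩)
  have dc := degree_const (φ := φ) (ε := ε) φ.contDiff z a₀ ag (by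
    intro t ht x hx
    exact hε.2.trans_le (hcc (t, x) ⟨ht, by simpa using hx⟩))
  simp only [add_sub_cancel] at dc
  rw [dc, ← h0] at h1
  have pos : 0 < ∫ w, φ w := φ.integral_pos
  have := le_of_mul_le_mul_right h1 pos
  rw [Set.ncard_eq_toFinset_card _ hfin]
  exact_mod_cast this



theorem Jc_sub_const {f : Cn 2 → Cn 2} {x : Cn 2} (hf : AnalyticAt ℂ f x) (q : Cn 2) :
    Jc (fun y => f y - q) x = Jc f x := by
  have h2 : AnalyticAt ℂ (fun y => f y - q) x := hf.sub analyticAt_const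
  rw [← det_fderiv_eq_Jc hf, ← det_fderiv_eq_Jc h2, fderiv_sub_const]

theorem deg_le' {f h₁ : Cn 2 → Cn 2} {r c : ℝ} {q : Cn 2}
    (a₀ : AnalyticOnNhd ℂ f (closedBall 0 r)) (a₁ : AnalyticOnNhd ℂ h₁ (closedBall 0 r))
    (hc : ∀ x : Cn 2, ‖x‖ = r → c ≤ ‖f x‖) (hq : ‖q‖ < c)
    (hreg : IsRegularValueOn f (ball 0 r) q)
    (hd : ∀ x : Cn 2, ‖x‖ = r → ‖h₁ x - f x‖ < c)
    (Z : Finset (Cn 2)) (hZ : ∀ z ∈ Z, z ∈ ball 0 r ∧ h₁ z = 0 ∧ Jc h₁ z ≠ 0) :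
    {x ∈ ball (0 : Cn 2) r | f x = q}.Finite ∧
    Z.card ≤ {x ∈ ball (0 : Cn 2) r | f x = q}.ncard := by
  have := deg_le (h₀ := fun y => f y - q) (h₁ := h₁) (r := r)
    (fun x hx => (a₀ x hx).sub analyticAt_const) a₁ (by
      intro t ht x hx h0
      have m0 : f x - q ∈ ball (f x) c := by simpa using hq
      have m1 : h₁ x ∈ ball (f x) c := by simpa [dist_eq_norm] using hd x hx
      have := (convex_ball (f x) c).add_smul_sub_mem m0 m1 ht
      rw [h0] at this
      simp at this
      linarith [hc x hx]) Z hZ (by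
      intro x hx h0
      rw [Jc_sub_const (a₀ x (ball_subset_closedBall hx)),
        ← bij_iff_Jc (a₀ x (ball_subset_closedBall hx))]
      exact hreg x hx (sub_eq_zero.1 h0))
  simpa only [sub_eq_zero] using this

theorem sphere_min {f : Cn 2 → Cn 2} {r : ℝ} (hr : 0 < r)
    (a₀ : AnalyticOnNhd ℂ f (closedBall 0 r))
    (h0 : ∀ x ∈ closedBall (0 : Cn 2) r, f x = 0 → x = 0) :
    ∃ c > 0, ∀ x : Cn 2, ‖x‖ = r → c ≤ ‖f x‖ := by
  obtain ⟨c, hc, hcc⟩ := compact_pos (isCompact_sphere (0 : Cn 2) r)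
    (f := fun x => ‖f x‖) ((a₀.continuousOn.mono sphere_subset_closedBall).norm) (by
      intro x hx
      rw [norm_pos_iff]
      intro hz
      have := h0 x (sphere_subset_closedBall hx) hz
      simp [this] at hx
      exact hr.ne hx)
  exact ⟨c, hc, fun x hx => hcc x (by simpa using hx)⟩

theorem regular_values {f : Cn 2 → Cn 2} {r : ℝ}
    (a : AnalyticOnNhd ℂ f (closedBall 0 r)) :
    ∀ ε > 0, ∃ q : Cn 2, ‖q‖ < ε ∧ IsRegularValueOn f (ball 0 r) q := by
  intro ε hε
  by_contra hcon
  push Not at hcon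
  let s : Set (Cn 2) := {x | x ∈ ball (0 : Cn 2) r ∧ Jc f x = 0}
  have hs0 : volume (f '' s) = 0 := by
    apply addHaar_image_eq_zero_of_det_fderivWithin_eq_zero volume
      (f' := fun x => (fderiv ℂ f x).restrictScalars ℝ)
    · intro x hx
      exact ((a x (ball_subset_closedBall hx.1)).differentiableAt.hasFDerivAt.restrictScalars
        ℝ).hasFDerivWithinAt
    · intro x hx
      rw [det_real (a x (ball_subset_closedBall hx.1)), hx.2]; simp
  have hsub : ball (0 : Cn 2) ε ⊆ f '' s := by
    intro q hq
    have := hcon q (by simpa using hq)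
    unfold IsRegularValueOn at this
    push Not at this
    obtain ⟨x, hx, hxq, hb⟩ := this
    refine ⟨x, ⟨hx, ?_⟩, hxq⟩
    rw [bij_iff_Jc (a x (ball_subset_closedBall hx))] at hb
    exact not_not.1 hb
  exact (measure_ball_pos volume (0 : Cn 2) hε).ne' (measure_mono_null hsub hs0)

theorem ncard_le {f : Cn 2 → Cn 2} {r c : ℝ} {q q' : Cn 2}
    (a₀ : AnalyticOnNhd ℂ f (closedBall 0 r))
    (hc : ∀ x : Cn 2, ‖x‖ = r → c ≤ ‖f x‖) (hq : ‖q‖ < c) (hq' : ‖q'‖ < c)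
    (hreg : IsRegularValueOn f (ball 0 r) q) (hreg' : IsRegularValueOn f (ball 0 r) q') :
    {x ∈ ball (0 : Cn 2) r | f x = q'}.ncard ≤ {x ∈ ball (0 : Cn 2) r | f x = q}.ncard := by
  have a₁ : AnalyticOnNhd ℂ (fun x => f x - q') (closedBall 0 r) :=
    fun x hx => (a₀ x hx).sub analyticAt_const
  have hd : ∀ x : Cn 2, ‖x‖ = r → ‖(f x - q') - f x‖ < c := by
    intro x _; simpa using hq'
  have fin := (deg_le' a₀ a₁ hc hq' hreg' hd ∅ (by simp)).1
  have := (deg_le' a₀ a₁ hc hq hreg hd fin.toFinset (by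
    intro z hz
    rw [Set.Finite.mem_toFinset] at hz
    have az := a₀ z (ball_subset_closedBall hz.1)
    refine ⟨hz.1, sub_eq_zero.2 hz.2, ?_⟩
    rw [Jc_sub_const az, ← bij_iff_Jc az]
    exact hreg' z hz.1 hz.2)).2
  rwa [Set.ncard_eq_toFinset_card _ fin]

theorem reduce {f : Cn 2 → Cn 2} (hf : AnalyticAt ℂ f 0) (hiso : IsolatedZeroAt0 f) (K : ℕ)
    (hK : ∀ ρ > 0, ∃ r, 0 < r ∧ r ≤ ρ ∧ ∀ ε > 0, ∃ h₁ : Cn 2 → Cn 2,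
      AnalyticOnNhd ℂ h₁ (closedBall 0 r) ∧ (∀ x ∈ closedBall 0 r, ‖h₁ x - f x‖ < ε) ∧
      ∃ Z : Finset (Cn 2), K ≤ Z.card ∧ ∀ z ∈ Z, z ∈ ball 0 r ∧ h₁ z = 0 ∧ Jc h₁ z ≠ 0) :
    K ≤ zeroOrder f 0 := by
  apply le_csInf
  · have h1 := hf.eventually_analyticAt
    have h2 := eventually_nhdsWithin_iff.1 hiso.2
    obtain ⟨r, hr, hrr⟩ := Metric.nhds_basis_closedBall.eventually_iff.1 (h1.and h2)
    have a₀ : AnalyticOnNhd ℂ f (closedBall 0 r) := fun x hx => (hrr hx).1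
    have hz : ∀ x ∈ closedBall (0 : Cn 2) r, f x = 0 → x = 0 := by
      intro x hx h0
      by_contra hne
      exact (hrr hx).2 hne h0
    obtain ⟨c, hc, hcc⟩ := sphere_min hr a₀ hz
    obtain ⟨q₀, hq₀, hr₀⟩ := regular_values a₀ c hc
    refine ⟨{x ∈ ball (0 : Cn 2) r | f x = q₀}.ncard, r, hr, a₀, hiso.1, hz,
      regular_values a₀, c, hc, ?_⟩
    intro q hq hreg
    exact le_antisymm (ncard_le a₀ hcc hq₀ hq hr₀ hreg) (ncard_le a₀ hcc hq hq₀ hreg hr₀)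
  · rintro m ⟨r, hr, a₀, -, hz, -, δ, hδ, hm⟩
    obtain ⟨r', hr', hr'r, hε⟩ := hK r hr
    have sub := closedBall_subset_closedBall (x := (0 : Cn 2)) hr'r
    have subo := ball_subset_ball (x := (0 : Cn 2)) hr'r
    have a' : AnalyticOnNhd ℂ f (closedBall 0 r') := fun x hx => a₀ x (sub hx)
    obtain ⟨c, hc, hcc⟩ := sphere_min hr a₀ hz
    obtain ⟨c', hc', hcc'⟩ := sphere_min hr' a' (fun x hx => hz x (sub hx))
    obtain ⟨q, hq, hreg⟩ := regular_values a₀ (min δ (min c c')) (by positivity)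
    simp only [lt_min_iff] at hq
    obtain ⟨h₁, a₁, hd, Z, hKZ, hZ⟩ := hε c' hc'
    have e1 := (deg_le' a' a₁ hcc' hq.2.2 (fun x hx => hreg x (subo hx))
      (fun x hx => hd x (by simp [hx])) Z hZ).2
    have e2 := (deg_le' a₀ a₀ hcc hq.2.1 hreg (by simpa using fun _ _ => hc) ∅ (by simp)).1
    have e3 : {x ∈ ball (0 : Cn 2) r' | f x = q}.ncard ≤ {x ∈ ball (0 : Cn 2) r | f x = q}.ncard :=
      Set.ncard_le_ncard (fun x hx => ⟨subo hx.1, hx.2⟩) e2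
    rw [hm q hq.1 hreg] at e3
    omega



/-- Diagonal scaling. -/
def sc (w : Cn 2) : Cn 2 →L[ℂ] Cn 2 :=
  ContinuousLinearMap.pi fun i => w i • ContinuousLinearMap.proj (R := ℂ) i

theorem sc_apply (w z : Cn 2) (i : Fin 2) : sc w z i = w i * z i := by
  simp [sc]

theorem sc_surj (w : Cn 2) (hw : ∀ i, w i ≠ 0) : Function.Surjective (sc w) := by
  intro y
  refine ⟨fun i => y i / w i, ?_⟩
  ext i
  rw [sc_apply]
  have := hw i
  field_simp

theorem sc_inj (w : Cn 2) (hw : ∀ i, w i ≠ 0) : Function.Injective (sc w) := by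
  intro y z h
  ext i
  have := congrFun h i
  rw [sc_apply, sc_apply] at this
  exact mul_left_cancel₀ (hw i) this

/-- Families of regular solutions. -/
def Fam (f : Cn 2 → Cn 2) (N α l u : ℕ) : Prop :=
  ∃ C : ℝ, 0 < C ∧ ∀ ρ > 0, ∀ᶠ σ : ℝ in 𝓝[>] 0, ∃ T : Finset (Cn 2), T.card = N ∧ ∀ z ∈ T,
    f z = ![(σ : ℂ) ^ α, 0] ∧ Jc f z ≠ 0 ∧ ‖z‖ < ρ ∧ C⁻¹ * σ ^ l < ‖z 1‖ ∧ ‖z 1‖ < C * σ ^ u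

theorem tendsto_sc {a b : ℕ} (ha : 0 < a) (hb : 0 < b) (z₀ : Cn 2) :
    Tendsto (fun p : ℂ × Cn 2 => sc ![p.1 ^ a, p.1 ^ b] p.2) (𝓝 (0, z₀)) (𝓝 0) := by
  have hc : Continuous (fun p : ℂ × Cn 2 => sc ![p.1 ^ a, p.1 ^ b] p.2) := by
    apply continuous_pi
    intro i
    simp only [sc_apply]
    fin_cases i <;> simp <;> fun_prop
  have := hc.tendsto (0, z₀)
  convert this using 2
  ext i
  simp only [sc_apply]
  fin_cases i <;> simp [ha.ne', hb.ne']

theorem point_family {f : Cn 2 → Cn 2} (hf : AnalyticAt ℂ f 0) {F : ℂ × Cn 2 → Cn 2}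
    {a b α β : ℕ} (ha : 0 < a) (hb : 0 < b) {z₀ : Cn 2} (hF : AnalyticAt ℂ F (0, z₀))
    (hrel : ∀ σ z, f (sc ![σ ^ a, σ ^ b] z) = sc ![σ ^ α, σ ^ β] (F (σ, z)))
    (h1 : F (0, z₀) = ![1, 0]) (hJ : Jc (fun z => F (0, z)) z₀ ≠ 0)
    {V : Set (Cn 2)} (hV : V ∈ 𝓝 z₀) {ρ : ℝ} (hρ : 0 < ρ) :
    ∀ᶠ σ : ℝ in 𝓝[>] 0, ∃ z ∈ V, f (sc ![(σ : ℂ) ^ a, (σ : ℂ) ^ b] z) = ![(σ : ℂ) ^ α, 0] ∧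
      Jc f (sc ![(σ : ℂ) ^ a, (σ : ℂ) ^ b] z) ≠ 0 ∧
      ‖sc ![(σ : ℂ) ^ a, (σ : ℂ) ^ b] z‖ < ρ := by
  have hpart : ∀ p : ℂ × Cn 2, AnalyticAt ℂ F p → HasFDerivAt (fun z => F (p.1, z))
      ((fderiv ℂ F p).comp (ContinuousLinearMap.inr ℂ ℂ (Cn 2))) p.2 := by
    intro p hp
    have h2 : HasFDerivAt (fun z : Cn 2 => (p.1, z)) (ContinuousLinearMap.inr ℂ ℂ (Cn 2)) p.2 :=
      hasFDerivAt_prodMk_right p.1 p.2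
    exact HasFDerivAt.comp (g := F) p.2 (hp.differentiableAt.hasFDerivAt) h2
  have hpan : ∀ p : ℂ × Cn 2, AnalyticAt ℂ F p → AnalyticAt ℂ (fun z => F (p.1, z)) p.2 := by
    intro p hp
    exact AnalyticAt.comp (g := F) (f := fun z : Cn 2 => (p.1, z)) hp
      (analyticAt_const.prod analyticAt_id)
  -- strict derivative of the extended map
  let Φ : ℂ × Cn 2 → ℂ × Cn 2 := fun p => (p.1, F p)
  have hΦ : HasStrictFDerivAt Φ ((ContinuousLinearMap.fst ℂ ℂ (Cn 2)).prod (fderiv ℂ F (0, z₀)))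
      (0, z₀) := hasStrictFDerivAt_fst.prodMk hF.hasStrictFDerivAt
  have hbij : Function.Bijective ((fderiv ℂ F (0, z₀)).comp
      (ContinuousLinearMap.inr ℂ ℂ (Cn 2))) := by
    have := (bij_iff_Jc (hpan (0, z₀) hF)).2 hJ
    rwa [(hpart (0, z₀) hF).fderiv] at this
  have hsurj : ((ContinuousLinearMap.fst ℂ ℂ (Cn 2)).prod (fderiv ℂ F (0, z₀))).range = ⊤ := by
    rw [LinearMap.range_eq_top]
    rintro ⟨s, w⟩
    obtain ⟨v, hv⟩ := hbij.2 (w - fderiv ℂ F (0, z₀) (s, 0))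
    refine ⟨(s, v), ?_⟩
    have e : fderiv ℂ F (0, z₀) (s, v) = fderiv ℂ F (0, z₀) (s, 0) + fderiv ℂ F (0, z₀) (0, v) := by
      rw [← map_add]; simp
    simp at hv
    simp [e, hv]
  have hmap := hΦ.map_nhds_eq_of_surj hsurj
  -- good neighbourhood
  have g1 : ∀ᶠ p : ℂ × Cn 2 in 𝓝 (0, z₀), AnalyticAt ℂ F p := hF.eventually_analyticAt
  have g2 : ∀ᶠ p : ℂ × Cn 2 in 𝓝 (0, z₀),
      Function.Bijective ((fderiv ℂ F p).comp (ContinuousLinearMap.inr ℂ ℂ (Cn 2))) := by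
    have hcont : ContinuousAt (fun p => ((fderiv ℂ F p).comp
      (ContinuousLinearMap.inr ℂ ℂ (Cn 2))).det) (0, z₀) := by
      have c1 : ContinuousAt (fderiv ℂ F) (0, z₀) := hF.fderiv.continuousAt
      have c2 : ContinuousAt (fun p => (fderiv ℂ F p).comp
        (ContinuousLinearMap.inr ℂ ℂ (Cn 2))) (0, z₀) := c1.clm_comp continuousAt_const
      exact (ContinuousLinearMap.continuous_det (𝕜 := ℂ) (E := Cn 2)).continuousAt.comp c2
    have hne : ((fderiv ℂ F (0, z₀)).comp (ContinuousLinearMap.inr ℂ ℂ (Cn 2))).det ≠ 0 := by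
      rw [← (hpart (0, z₀) hF).fderiv]
      exact (det_fderiv_eq_Jc (hpan (0, z₀) hF)).trans_ne hJ
    filter_upwards [hcont.eventually_ne hne] with p hp
    exact (LinearMap.equivOfDetNeZero _ hp).bijective
  have g3 : ∀ᶠ p : ℂ × Cn 2 in 𝓝 (0, z₀), p.2 ∈ V :=
    (continuous_snd.tendsto ((0, z₀) : ℂ × Cn 2)).eventually hV
  have g4 := (tendsto_sc ha hb z₀).eventually hf.eventually_analyticAt
  have g5 := (tendsto_sc ha hb z₀).eventually (Metric.ball_mem_nhds (0 : Cn 2) hρ)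
  have himg := Filter.image_mem_map (m := Φ) (g1.and (g2.and (g3.and (g4.and g5))))
  rw [hmap] at himg
  have hσ : Tendsto (fun σ : ℝ => ((σ : ℂ), (![1, 0] : Cn 2))) (𝓝[>] 0) (𝓝 (Φ (0, z₀))) := by
    have : Continuous (fun σ : ℝ => ((σ : ℂ), (![1, 0] : Cn 2))) := by fun_prop
    have := (this.tendsto 0).mono_left (nhdsWithin_le_nhds (s := Ioi (0 : ℝ)))
    simpa [Φ, h1] using this
  filter_upwards [hσ himg, self_mem_nhdsWithin] with σ hσ1 hpos
  obtain ⟨⟨s, z⟩, ⟨k1, k2, k3, k4, k5⟩, hpe⟩ := hσ1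
  simp only [Φ, Prod.mk.injEq] at hpe
  obtain ⟨rfl, hpe⟩ := hpe
  have hσ0 : (σ : ℂ) ≠ 0 := by exact_mod_cast (ne_of_gt hpos)
  refine ⟨z, k3, ?_, ?_, by simpa using k5⟩
  · rw [hrel, hpe]
    ext i
    rw [sc_apply]
    fin_cases i <;> simp
  · rw [← bij_iff_Jc k4]
    have d1 : HasFDerivAt (fun z => f (sc ![(σ : ℂ) ^ a, (σ : ℂ) ^ b] z))
        ((fderiv ℂ f (sc ![(σ : ℂ) ^ a, (σ : ℂ) ^ b] z)).comp (sc ![(σ : ℂ) ^ a, (σ : ℂ) ^ b])) z :=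
      HasFDerivAt.comp (g := f) z k4.differentiableAt.hasFDerivAt
        (sc ![(σ : ℂ) ^ a, (σ : ℂ) ^ b]).hasFDerivAt
    have d2 := (sc ![(σ : ℂ) ^ α, (σ : ℂ) ^ β]).hasFDerivAt.comp z (hpart (↑σ, z) k1)
    have d3 := d1.unique (d2.congr_of_eventuallyEq (Eventually.of_forall fun z => hrel σ z))
    have hs : Function.Surjective (fderiv ℂ f (sc ![(σ : ℂ) ^ a, (σ : ℂ) ^ b] z)) := by
      intro w
      obtain ⟨w1, hw1⟩ := sc_surj ![(σ : ℂ) ^ α, (σ : ℂ) ^ β]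
        (by intro i; fin_cases i <;> simp [hσ0]) w
      obtain ⟨w2, hw2⟩ := k2.2 w1
      refine ⟨sc ![(σ : ℂ) ^ a, (σ : ℂ) ^ b] w2, ?_⟩
      have := DFunLike.congr_fun d3 w2
      rw [ContinuousLinearMap.comp_apply, ContinuousLinearMap.comp_apply] at this
      rw [this, ← hw1, ← hw2]
    exact ⟨(LinearMap.injective_iff_surjective (f := ((fderiv ℂ f
      (sc ![(σ : ℂ) ^ a, (σ : ℂ) ^ b] z) : Cn 2 →L[ℂ] Cn 2) : Cn 2 →ₗ[ℂ] Cn 2))).2 hs, hs⟩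

theorem fam_abs {f : Cn 2 → Cn 2} (hf : AnalyticAt ℂ f 0) {F : ℂ × Cn 2 → Cn 2}
    {a b α β : ℕ} (ha : 0 < a) (hb : 0 < b) (hF : ∀ z, AnalyticAt ℂ F (0, z))
    (hrel : ∀ σ z, f (sc ![σ ^ a, σ ^ b] z) = sc ![σ ^ α, σ ^ β] (F (σ, z)))
    (S : Finset (Cn 2))
    (hS : ∀ z ∈ S, z 1 ≠ 0 ∧ F (0, z) = ![1, 0] ∧ Jc (fun z => F (0, z)) z ≠ 0) :
    Fam f S.card α b b := by
  let C : ℝ := ∑ z ∈ S, (‖z 1‖ + ‖z 1‖⁻¹) + 1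
  have hC : 0 < C := by
    have : 0 ≤ ∑ z ∈ S, (‖z 1‖ + ‖z 1‖⁻¹) := Finset.sum_nonneg fun z _ => by positivity
    simp only [C]; linarith
  have hCz : ∀ z ∈ S, C⁻¹ < ‖z 1‖ ∧ ‖z 1‖ < C := by
    intro z hz
    have h0 : 0 < ‖z 1‖ := norm_pos_iff.2 (hS z hz).1
    have : ‖z 1‖ + ‖z 1‖⁻¹ ≤ ∑ z ∈ S, (‖z 1‖ + ‖z 1‖⁻¹) :=
      Finset.single_le_sum (f := fun z : Cn 2 => ‖z 1‖ + ‖z 1‖⁻¹) (fun z _ => by positivity) hz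
    have h3 : 0 < ‖z 1‖⁻¹ := inv_pos.2 h0
    constructor
    · rw [inv_lt_comm₀ hC h0]; simp only [C]; linarith
    · simp only [C]; linarith
  obtain ⟨U, hU, hUd⟩ := S.finite_toSet.t2_separation
  refine ⟨C, hC, fun ρ hρ => ?_⟩
  have key : ∀ᶠ σ : ℝ in 𝓝[>] 0, ∀ z₀ ∈ S, ∃ z ∈ U z₀ ∩ {z | C⁻¹ < ‖z 1‖ ∧ ‖z 1‖ < C},
      f (sc ![(σ : ℂ) ^ a, (σ : ℂ) ^ b] z) = ![(σ : ℂ) ^ α, 0] ∧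
      Jc f (sc ![(σ : ℂ) ^ a, (σ : ℂ) ^ b] z) ≠ 0 ∧
      ‖sc ![(σ : ℂ) ^ a, (σ : ℂ) ^ b] z‖ < ρ := by
    rw [Filter.eventually_all_finset]
    intro z₀ hz₀
    apply point_family hf ha hb (hF z₀) hrel (hS z₀ hz₀).2.1 (hS z₀ hz₀).2.2 _ hρ
    apply inter_mem ((hU z₀).2.mem_nhds (hU z₀).1)
    have c : Continuous fun z : Cn 2 => ‖z 1‖ := by fun_prop
    exact (c.tendsto z₀).eventually (Ioo_mem_nhds (hCz z₀ hz₀).1 (hCz z₀ hz₀).2)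
  filter_upwards [key, self_mem_nhdsWithin] with σ hσ hpos
  have hpos : 0 < σ := hpos
  have hσ0 : (σ : ℂ) ≠ 0 := by exact_mod_cast hpos.ne'
  choose! g hg using hσ
  refine ⟨S.image fun z => sc ![(σ : ℂ) ^ a, (σ : ℂ) ^ b] (g z), ?_, ?_⟩
  · apply Finset.card_image_of_injOn
    intro x hx y hy hxy
    have h := sc_inj _ (by intro i; fin_cases i <;> simp [hσ0]) hxy
    by_contra hne
    have := hUd hx hy hne
    exact Set.disjoint_left.1 this (hg x hx).1.1 (h ▸ (hg y hy).1.1)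
  · intro z hz
    obtain ⟨x, hx, rfl⟩ := Finset.mem_image.1 hz
    obtain ⟨⟨-, h1, h2⟩, h3, h4, h5⟩ := hg x hx
    refine ⟨h3, h4, h5, ?_, ?_⟩
    · rw [sc_apply]; simp [abs_of_pos hpos]
      rw [mul_comm (σ ^ b)]; gcongr
    · rw [sc_apply]; simp [abs_of_pos hpos]
      rw [mul_comm (σ ^ b)]; gcongr

theorem Fam.merge {f : Cn 2 → Cn 2} {N₁ α₁ l₁ u₁ N₂ α₂ l₂ u₂ : ℕ} (h₁ : Fam f N₁ α₁ l₁ u₁)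
    (h₂ : Fam f N₂ α₂ l₂ u₂) (hα₁ : 0 < α₁) (hα₂ : 0 < α₂) (hlt : l₂ * α₁ < u₁ * α₂)
    (hl : u₁ ≤ l₁) (hu : u₂ ≤ l₂) :
    Fam f (N₁ + N₂) (α₁ * α₂) (l₁ * α₂) (u₂ * α₁) := by
  obtain ⟨C₁, hC₁, h₁⟩ := h₁
  obtain ⟨C₂, hC₂, h₂⟩ := h₂
  have tp : ∀ k : ℕ, 0 < k → Tendsto (fun τ : ℝ => τ ^ k) (𝓝[>] 0) (𝓝[>] 0) := by
    intro k hk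
    apply tendsto_nhdsWithin_of_tendsto_nhds_of_eventually_within
    · have := ((continuous_pow (M := ℝ) k).tendsto 0).mono_left (nhdsWithin_le_nhds (s := Ioi (0 : ℝ)))
      simpa [hk.ne'] using this
    · filter_upwards [self_mem_nhdsWithin] with τ hτ
      exact pow_pos (mem_Ioi.1 hτ) k
  refine ⟨max C₁ C₂, lt_max_of_lt_left hC₁, fun ρ hρ => ?_⟩
  have sep : ∀ᶠ τ : ℝ in 𝓝[>] 0, C₁ * C₂ * τ < 1 := by
    have : Tendsto (fun τ : ℝ => C₁ * C₂ * τ) (𝓝[>] 0) (𝓝 0) := by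
      have c : Continuous fun τ : ℝ => C₁ * C₂ * τ := by fun_prop
      simpa using (c.tendsto 0).mono_left (nhdsWithin_le_nhds (s := Ioi (0 : ℝ)))
    exact this.eventually (Iio_mem_nhds one_pos)
  filter_upwards [(tp α₂ hα₂).eventually (h₁ ρ hρ), (tp α₁ hα₁).eventually (h₂ ρ hρ), sep,
    Ioo_mem_nhdsGT (one_pos (α := ℝ))] with τ ⟨T₁, c₁, hT₁⟩ ⟨T₂, c₂, hT₂⟩ hs ⟨hτ, hτ1⟩
  have q1 : C₁ * (τ ^ α₂) ^ u₁ ≤ C₂⁻¹ * (τ ^ α₁) ^ l₂ := by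
    rw [← pow_mul, ← pow_mul]
    have e : τ ^ (α₂ * u₁) ≤ τ ^ (α₁ * l₂ + 1) := by
      apply pow_le_pow_of_le_one hτ.le hτ1.le
      nlinarith
    rw [pow_succ] at e
    rw [← div_eq_inv_mul, le_div_iff₀ hC₂]
    have : 0 < τ ^ (α₁ * l₂) := by positivity
    calc C₁ * τ ^ (α₂ * u₁) * C₂ ≤ C₁ * (τ ^ (α₁ * l₂) * τ) * C₂ := by gcongr
      _ = (C₁ * C₂ * τ) * τ ^ (α₁ * l₂) := by ring
      _ ≤ 1 * τ ^ (α₁ * l₂) := by gcongr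
      _ = _ := one_mul _
  have dis : Disjoint T₁ T₂ := by
    rw [Finset.disjoint_left]
    intro z hz1 hz2
    have a1 := (hT₁ z hz1).2.2.2.2
    have a2 := (hT₂ z hz2).2.2.2.1
    linarith
  have i1 : (max C₁ C₂)⁻¹ ≤ C₁⁻¹ := by gcongr; exact le_max_left _ _
  have i2 : (max C₁ C₂)⁻¹ ≤ C₂⁻¹ := by gcongr; exact le_max_right _ _
  have p1 : τ ^ (l₁ * α₂) ≤ τ ^ (l₂ * α₁) := by
    apply pow_le_pow_of_le_one hτ.le hτ1.le
    nlinarith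
  have p2 : τ ^ (u₁ * α₂) ≤ τ ^ (u₂ * α₁) := by
    apply pow_le_pow_of_le_one hτ.le hτ1.le
    nlinarith
  refine ⟨T₁ ∪ T₂, by rw [Finset.card_union_of_disjoint dis, c₁, c₂], fun z hz => ?_⟩
  rcases Finset.mem_union.1 hz with hz | hz
  · obtain ⟨k1, k2, k3, k4, k5⟩ := hT₁ z hz
    rw [← pow_mul, mul_comm] at k4 k5
    refine ⟨by rw [k1]; push_cast; rw [← pow_mul, mul_comm α₂], k2, k3, ?_, ?_⟩
    · refine lt_of_le_of_lt ?_ k4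
      rw [mul_comm _ (C₁⁻¹), mul_comm α₂]
      gcongr
    · refine k5.trans_le ?_
      rw [mul_comm _ C₁, mul_comm α₂]
      gcongr
      exact le_max_left _ _
  · obtain ⟨k1, k2, k3, k4, k5⟩ := hT₂ z hz
    rw [← pow_mul, mul_comm] at k4 k5
    refine ⟨by rw [k1]; push_cast; rw [← pow_mul], k2, k3, ?_, ?_⟩
    · refine lt_of_le_of_lt ?_ k4
      rw [mul_comm _ (C₂⁻¹), mul_comm α₁]
      gcongr
    · refine k5.trans_le ?_
      rw [mul_comm _ C₂, mul_comm α₁]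
      gcongr
      exact le_max_right _ _



/-- Four-term sum. -/
def ms (p q : Fin 4 → ℕ) (e : Fin 4 → Cn 2 → ℂ) (z : Cn 2) : ℂ :=
  ∑ j, z 0 ^ p j * z 1 ^ q j * e j z

theorem poly_hasFDerivAt (p q : Fin 4 → ℕ) (A : Fin 4 → ℂ) (x : Cn 2) :
    HasFDerivAt (fun z : Cn 2 => ∑ j, A j * (z 0 ^ p j * z 1 ^ q j))
      (∑ j, A j • (x 0 ^ p j • ((q j * x 1 ^ (q j - 1)) • ContinuousLinearMap.proj (R := ℂ) 1) +
        x 1 ^ q j • ((p j * x 0 ^ (p j - 1)) • ContinuousLinearMap.proj (R := ℂ) 0)) :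
        Cn 2 →L[ℂ] ℂ) x := by
  apply HasFDerivAt.fun_sum
  intro j _
  have h0 : HasFDerivAt (fun z : Cn 2 => z 0) (ContinuousLinearMap.proj (R := ℂ) 0 : Cn 2 →L[ℂ] ℂ) x :=
    hasFDerivAt_apply 0 x
  have h1 : HasFDerivAt (fun z : Cn 2 => z 1) (ContinuousLinearMap.proj (R := ℂ) 1 : Cn 2 →L[ℂ] ℂ) x :=
    hasFDerivAt_apply 1 x
  have k0 : HasFDerivAt (fun z : Cn 2 => z 0 ^ p j)
    ((p j * x 0 ^ (p j - 1)) • ContinuousLinearMap.proj (R := ℂ) 0 : Cn 2 →L[ℂ] ℂ) x := by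
    exact (hasDerivAt_pow (p j) (x 0)).comp_hasFDerivAt x h0
  have k1 : HasFDerivAt (fun z : Cn 2 => z 1 ^ q j)
    ((q j * x 1 ^ (q j - 1)) • ContinuousLinearMap.proj (R := ℂ) 1 : Cn 2 →L[ℂ] ℂ) x := by
    exact (hasDerivAt_pow (q j) (x 1)).comp_hasFDerivAt x h1
  exact (k0.mul k1).const_mul (A j)

theorem pow_pred_mul (k : ℕ) (x : ℂ) : (k : ℂ) * x ^ (k - 1) * x = k * x ^ k := by
  cases k with
  | zero => simp
  | succ k => simp [pow_succ, mul_assoc]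

theorem poly_pd0 (p q : Fin 4 → ℕ) (A : Fin 4 → ℂ) (x : Cn 2) :
    pd 0 (fun z : Cn 2 => ∑ j, A j * (z 0 ^ p j * z 1 ^ q j)) x * x 0
      = ∑ j, p j * (A j * (x 0 ^ p j * x 1 ^ q j)) := by
  unfold pd
  rw [(poly_hasFDerivAt p q A x).fderiv, ContinuousLinearMap.sum_apply, Finset.sum_mul]
  apply Finset.sum_congr rfl
  intro j _
  simp
  linear_combination A j * x 1 ^ q j * pow_pred_mul (p j) (x 0)

theorem poly_pd1 (p q : Fin 4 → ℕ) (A : Fin 4 → ℂ) (x : Cn 2) :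
    pd 1 (fun z : Cn 2 => ∑ j, A j * (z 0 ^ p j * z 1 ^ q j)) x * x 1
      = ∑ j, q j * (A j * (x 0 ^ p j * x 1 ^ q j)) := by
  unfold pd
  rw [(poly_hasFDerivAt p q A x).fderiv, ContinuousLinearMap.sum_apply, Finset.sum_mul]
  apply Finset.sum_congr rfl
  intro j _
  simp
  linear_combination A j * x 0 ^ p j * pow_pred_mul (q j) (x 1)

theorem poly_euler (p q : Fin 4 → ℕ) (A : Fin 4 → ℂ) (x : Cn 2) (a b α : ℕ)
    (hA : ∀ j, A j ≠ 0 → a * p j + b * q j = α) :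
    a * (pd 0 (fun z : Cn 2 => ∑ j, A j * (z 0 ^ p j * z 1 ^ q j)) x * x 0) +
    b * (pd 1 (fun z : Cn 2 => ∑ j, A j * (z 0 ^ p j * z 1 ^ q j)) x * x 1)
      = α * ∑ j, A j * (x 0 ^ p j * x 1 ^ q j) := by
  rw [poly_pd0, poly_pd1, Finset.mul_sum, Finset.mul_sum, Finset.mul_sum, ← Finset.sum_add_distrib]
  apply Finset.sum_congr rfl
  intro j _
  by_cases h : A j = 0
  · simp [h]
  · rw [← hA j h]; push_cast; ring

theorem fam_mono {p q p' q' : Fin 4 → ℕ} {e c : Fin 4 → Cn 2 → ℂ}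
    (he : ∀ j, AnalyticAt ℂ (e j) 0) (hc : ∀ j, AnalyticAt ℂ (c j) 0) {a b α β : ℕ}
    (ha : 0 < a) (hb : 0 < b) (hα0 : 0 < α)
    (hα : ∀ j, α ≤ a * p j + b * q j) (hβ : ∀ j, β ≤ a * p' j + b * q' j)
    {A B : Fin 4 → ℂ} (hA : ∀ j, A j = if a * p j + b * q j = α then e j 0 else 0)
    (hB : ∀ j, B j = if a * p' j + b * q' j = β then c j 0 else 0)
    (S : Finset (Cn 2)) (hS : ∀ z ∈ S, z 1 ≠ 0 ∧ ∑ j, A j * (z 0 ^ p j * z 1 ^ q j) = 1 ∧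
      ∑ j, B j * (z 0 ^ p' j * z 1 ^ q' j) = 0 ∧
      ∑ j, q' j * (B j * (z 0 ^ p' j * z 1 ^ q' j)) ≠ 0) :
    Fam (fun z => ![ms p q e z, ms p' q' c z]) S.card α b b := by
  have hcoord : ∀ i : Fin 2, AnalyticAt ℂ (fun z : Cn 2 => z i) 0 := fun i =>
    (ContinuousLinearMap.proj (R := ℂ) i : Cn 2 →L[ℂ] ℂ).analyticAt 0
  have hms : ∀ (p q : Fin 4 → ℕ) (e : Fin 4 → Cn 2 → ℂ), (∀ j, AnalyticAt ℂ (e j) 0) →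
      AnalyticAt ℂ (ms p q e) 0 := by
    intro p q e he
    unfold ms
    apply Finset.analyticAt_fun_sum
    intro j _
    exact (((hcoord 0).pow _).mul ((hcoord 1).pow _)).mul (he j)
  have hscan : ∀ z, AnalyticAt ℂ (fun w : ℂ × Cn 2 => sc ![w.1 ^ a, w.1 ^ b] w.2) (0, z) := by
    intro z
    rw [analyticAt_pi_iff]
    intro i
    simp only [sc_apply]
    have h1 : AnalyticAt ℂ (fun w : ℂ × Cn 2 => w.2 i) (0, z) :=
      ((ContinuousLinearMap.proj (R := ℂ) i : Cn 2 →L[ℂ] ℂ).comp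
        (ContinuousLinearMap.snd ℂ ℂ (Cn 2))).analyticAt _
    apply AnalyticAt.mul _ h1
    fin_cases i
    · exact analyticAt_fst.pow _
    · exact analyticAt_fst.pow _
  have hsc0 : ∀ z, sc ![(0:ℂ) ^ a, (0:ℂ) ^ b] z = 0 := by
    intro z
    ext i
    rw [sc_apply]
    fin_cases i <;> simp [ha.ne', hb.ne']
  let G : (Fin 4 → ℕ) → (Fin 4 → ℕ) → (Fin 4 → Cn 2 → ℂ) → ℕ → ℂ × Cn 2 → ℂ :=
    fun p q e α w => ∑ j, w.1 ^ (a * p j + b * q j - α) * (w.2 0 ^ p j * w.2 1 ^ q j) *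
      e j (sc ![w.1 ^ a, w.1 ^ b] w.2)
  have hG : ∀ p q e α z, (∀ j, AnalyticAt ℂ (e j) 0) → AnalyticAt ℂ (G p q e α) (0, z) := by
    intro p q e α z he
    apply Finset.analyticAt_fun_sum
    intro j _
    have h1 : ∀ i, AnalyticAt ℂ (fun w : ℂ × Cn 2 => w.2 i) (0, z) := fun i =>
      ((ContinuousLinearMap.proj (R := ℂ) i : Cn 2 →L[ℂ] ℂ).comp
        (ContinuousLinearMap.snd ℂ ℂ (Cn 2))).analyticAt _
    refine ((analyticAt_fst.pow _).mul (((h1 0).pow _).mul ((h1 1).pow _))).mul ?_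
    apply AnalyticAt.comp' _ (hscan z)
    simp only [hsc0]
    exact he j
  have hGrel : ∀ p q e α σ z, (∀ j, α ≤ a * p j + b * q j) →
      ms p q e (sc ![σ ^ a, σ ^ b] z) = σ ^ α * G p q e α (σ, z) := by
    intro p q e α σ z h
    simp only [ms, G, Finset.mul_sum]
    apply Finset.sum_congr rfl
    intro j _
    have : σ ^ (a * p j) * σ ^ (b * q j) = σ ^ α * σ ^ (a * p j + b * q j - α) := by
      rw [← pow_add, ← pow_add, Nat.add_sub_cancel' (h j)]
    simp only [sc_apply, mul_pow, Matrix.cons_val_zero, Matrix.cons_val_one, ← pow_mul]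
    linear_combination (z 0 ^ p j * z 1 ^ q j * e j (sc ![σ ^ a, σ ^ b] z)) * this
  have hG0 : ∀ p q e α (A : Fin 4 → ℂ) z, (∀ j, α ≤ a * p j + b * q j) →
      (∀ j, A j = if a * p j + b * q j = α then e j 0 else 0) →
      G p q e α (0, z) = ∑ j, A j * (z 0 ^ p j * z 1 ^ q j) := by
    intro p q e α A z h hA
    simp only [G, hsc0]
    apply Finset.sum_congr rfl
    intro j _
    rw [hA j]
    by_cases hj : a * p j + b * q j = α
    · simp [hj]; ring
    · have : a * p j + b * q j - α ≠ 0 := by have := h j; omega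
      simp [hj, this]
  apply fam_abs (F := fun w => ![G p q e α w, G p' q' c β w]) (a := a) (β := β) _ ha hb
  · intro z
    rw [analyticAt_pi_iff]
    intro i
    fin_cases i
    · exact hG p q e α z he
    · exact hG p' q' c β z hc
  · intro σ z
    ext i
    rw [sc_apply]
    fin_cases i
    · simpa using hGrel p q e α σ z hα
    · simpa using hGrel p' q' c β σ z hβ
  · intro z hz
    obtain ⟨z1, h1, h2, h3⟩ := hS z hz
    simp only [hG0 p q e α A _ hα hA, hG0 p' q' c β B _ hβ hB]
    refine ⟨z1, by rw [h1, h2], ?_⟩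
    intro hJ
    simp only [Jc, Matrix.cons_val_zero, Matrix.cons_val_one] at hJ
    have E1 := poly_euler p q A z a b α (by
      intro j hj; rw [hA j] at hj; by_contra hh; simp [hh] at hj)
    have E2 := poly_euler p' q' B z a b β (by
      intro j hj; rw [hB j] at hj; by_contra hh; simp [hh] at hj)
    rw [← poly_pd1] at h3
    rw [h1] at E1
    rw [h2] at E2
    generalize pd 0 (fun z : Cn 2 => ∑ j, A j * (z 0 ^ p j * z 1 ^ q j)) z = x1 at *
    generalize pd 1 (fun z : Cn 2 => ∑ j, A j * (z 0 ^ p j * z 1 ^ q j)) z = x2 at *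
    generalize pd 0 (fun z : Cn 2 => ∑ j, B j * (z 0 ^ p' j * z 1 ^ q' j)) z = x3 at *
    generalize pd 1 (fun z : Cn 2 => ∑ j, B j * (z 0 ^ p' j * z 1 ^ q' j)) z = x4 at *
    have : (α : ℂ) * (x4 * z 1) = 0 := by
      linear_combination (a * z 0 * z 1) * hJ - (x4 * z 1) * E1 + (x2 * z 1) * E2
    rcases mul_eq_zero.1 this with h | h
    · exact hα0.ne' (by exact_mod_cast h)
    · exact h3 h
  · rw [analyticAt_pi_iff]
    intro i
    fin_cases i
    · exact hms p q e he
    · exact hms p' q' c hc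



theorem exists_roots {m : ℕ} (hm : 0 < m) {η : ℂ} (hη : η ≠ 0) :
    ∃ T : Finset ℂ, T.card = m ∧ ∀ x ∈ T, x ^ m = η := by
  have hp := Complex.isPrimitiveRoot_exp m hm.ne'
  refine ⟨⟨nthRoots m η, hp.nthRoots_nodup hη⟩, ?_, ?_⟩
  · rw [Finset.card_mk, hp.card_nthRoots, if_pos (IsAlgClosed.exists_pow_nat_eq η hm)]
  · intro x hx
    rw [Finset.mem_mk, mem_nthRoots hm] at hx
    exact hx

theorem exists_pairs {M k : ℕ} (hM : 0 < M) (hk : 0 < k) {η : ℂ} (hη : η ≠ 0) (g : ℂ → ℂ)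
    (hg : ∀ x, x ≠ 0 → g x ≠ 0) :
    ∃ S : Finset (Cn 2), S.card = M * k ∧ ∀ z ∈ S, z 0 ≠ 0 ∧ z 1 ≠ 0 ∧
      z 0 ^ M = η ∧ z 1 ^ k = g (z 0) := by
  obtain ⟨T, hT, hT'⟩ := exists_roots hM hη
  have hx0 : ∀ x ∈ T, x ≠ 0 := by
    rintro x hx rfl
    have := hT' _ hx
    rw [zero_pow hM.ne'] at this
    exact hη this.symm
  have : ∀ x ∈ T, ∃ U : Finset ℂ, U.card = k ∧ ∀ y ∈ U, y ^ k = g x :=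
    fun x hx => exists_roots hk (hg x (hx0 x hx))
  choose! U hU hU' using this
  refine ⟨(T.sigma U).image fun s => ![s.1, s.2], ?_, ?_⟩
  · rw [Finset.card_image_of_injective, Finset.card_sigma, Finset.sum_congr rfl hU]
    · simp [hT]
    · rintro ⟨x, y⟩ ⟨x', y'⟩ h
      have h0 := congrFun h 0
      have h1 := congrFun h 1
      simp at h0 h1
      simp [h0, h1]
  · intro z hz
    obtain ⟨⟨x, y⟩, hs, rfl⟩ := Finset.mem_image.1 hz
    rw [Finset.mem_sigma] at hs
    have hy : y ^ k = g x := hU' x hs.1 y hs.2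
    refine ⟨by simpa using hx0 x hs.1, ?_, by simpa using hT' x hs.1, by simpa using hy⟩
    simp only [Matrix.cons_val_one, Matrix.cons_val_fin_one]
    rintro rfl
    rw [zero_pow hk.ne'] at hy
    exact hg x (hx0 x hs.1) hy.symm

/-- The model map. -/
def ft (d n₁ n₂ : ℕ) (e c : Fin 4 → Cn 2 → ℂ) : Cn 2 → Cn 2 := fun z =>
  ![ms ![d * n₁ + 1, n₁ + 1, 1, 0] ![0, n₂, d * n₂, 2 * d * n₂ + 1] e z,
    ms ![d * n₁, n₁, 0, 2 * d * n₁ + 1] ![1, n₂ + 1, d * n₂ + 1, 0] c z]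

theorem ineq1 {d n₁ n₂ : ℕ} (hd : 1 < d) (hn₁ : 1 < n₁) (hn₂ : 1 < n₂) :
    d * n₁ + 1 < 1 * (n₁ + 1) + (d * n₁ + 1) * n₂ ∧
    d * n₁ + 1 < 1 * 1 + (d * n₁ + 1) * (d * n₂) ∧
    d * n₁ + 1 < 1 * 0 + (d * n₁ + 1) * (2 * d * n₂ + 1) ∧
    2 * d * n₁ + 1 < 1 * n₁ + (d * n₁ + 1) * (n₂ + 1) ∧
    2 * d * n₁ + 1 < 1 * 0 + (d * n₁ + 1) * (d * n₂ + 1) := by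
  obtain ⟨d, rfl⟩ := Nat.exists_eq_add_of_lt hd
  obtain ⟨n₁, rfl⟩ := Nat.exists_eq_add_of_lt hn₁
  obtain ⟨n₂, rfl⟩ := Nat.exists_eq_add_of_lt hn₂
  refine ⟨?_, ?_, ?_, ?_, ?_⟩ <;> (zify; rw [← sub_pos]; ring_nf; positivity)

theorem ineq2 {E d n₁ n₂ : ℕ} (hE : 1 < E) (hd : d = E + 1) (hn₁ : 1 < n₁) (hn₂ : 1 < n₂) :
    n₂ * (d * n₁ + 1) < n₂ * 1 + (E * n₁) * (d * n₂) ∧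
    n₂ * (d * n₁ + 1) < n₂ * 0 + (E * n₁) * (2 * d * n₂ + 1) ∧
    d * n₁ * n₂ + E * n₁ < n₂ * 0 + (E * n₁) * (d * n₂ + 1) ∧
    d * n₁ * n₂ + E * n₁ < n₂ * (2 * d * n₁ + 1) + (E * n₁) * 0 := by
  subst hd
  obtain ⟨d, rfl⟩ := Nat.exists_eq_add_of_lt hE
  obtain ⟨n₁, rfl⟩ := Nat.exists_eq_add_of_lt hn₁
  obtain ⟨n₂, rfl⟩ := Nat.exists_eq_add_of_lt hn₂
  refine ⟨?_, ?_, ?_, ?_⟩ <;> (zify; rw [← sub_pos]; ring_nf; positivity)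

theorem ineq3 {E d n₁ n₂ : ℕ} (hE : 1 < E) (hd : d = E + 1) (hn₁ : 1 < n₁) (hn₂ : 1 < n₂) :
    E * n₂ + d * n₁ * n₂ < (E * n₂) * (d * n₁ + 1) + n₁ * 0 ∧
    E * n₂ + d * n₁ * n₂ < (E * n₂) * 0 + n₁ * (2 * d * n₂ + 1) ∧
    n₁ * (d * n₂ + 1) < (E * n₂) * (d * n₁) + n₁ * 1 ∧
    n₁ * (d * n₂ + 1) < (E * n₂) * (2 * d * n₁ + 1) + n₁ * 0 := by
  subst hd
  obtain ⟨d, rfl⟩ := Nat.exists_eq_add_of_lt hE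
  obtain ⟨n₁, rfl⟩ := Nat.exists_eq_add_of_lt hn₁
  obtain ⟨n₂, rfl⟩ := Nat.exists_eq_add_of_lt hn₂
  refine ⟨?_, ?_, ?_, ?_⟩ <;> (zify; rw [← sub_pos]; ring_nf; positivity)

theorem ineq4 {n₁ n₂ : ℕ} (hn₁ : 1 < n₁) (hn₂ : 1 < n₂) :
    n₂ * (2 * n₁ + 1) < n₂ * 0 + n₁ * (2 * 2 * n₂ + 1) ∧
    2 * n₁ * n₂ + n₁ < n₂ * (2 * 2 * n₁ + 1) + n₁ * 0 := by
  obtain ⟨n₁, rfl⟩ := Nat.exists_eq_add_of_lt hn₁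
  obtain ⟨n₂, rfl⟩ := Nat.exists_eq_add_of_lt hn₂
  refine ⟨?_, ?_⟩ <;> (zify; rw [← sub_pos]; ring_nf; positivity)

theorem fin4_of {P : Fin 4 → Prop} (h0 : P 0) (h1 : P 1) (h2 : P 2) (h3 : P 3) : ∀ j, P j := by
  intro j
  fin_cases j
  exacts [h0, h1, h2, h3]

theorem fam1 {d n₁ n₂ : ℕ} (hd : 1 < d) (hn₁ : 1 < n₁) (hn₂ : 1 < n₂)
    {e c : Fin 4 → Cn 2 → ℂ}
    (he : ∀ j, AnalyticAt ℂ (e j) 0) (hc : ∀ j, AnalyticAt ℂ (c j) 0)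
    (e1 : e 0 0 ≠ 0) (c1 : c 0 0 ≠ 0) (c4 : c 3 0 ≠ 0) :
    Fam (ft d n₁ n₂ e c) (d * n₁ + 1) (d * n₁ + 1) (d * n₁ + 1) (d * n₁ + 1) := by
  obtain ⟨S, hS, hS'⟩ := exists_pairs (M := d * n₁ + 1) (k := 1) (by omega) one_pos
    (η := (e 0 0)⁻¹) (by positivity) (fun x => - c 3 0 / c 0 0 * x ^ (d * n₁ + 1))
    (fun x hx => mul_ne_zero (div_ne_zero (neg_ne_zero.2 c4) c1) (pow_ne_zero _ hx))
  obtain ⟨i1, i2, i3, i4, i5⟩ := ineq1 hd hn₁ hn₂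
  rw [mul_one] at hS
  nth_rw 1 [← hS]
  apply fam_mono he hc (a := 1) (b := d * n₁ + 1) (β := 2 * d * n₁ + 1) one_pos (by omega) (by omega)
    (A := ![e 0 0, 0, 0, 0]) (B := ![c 0 0, 0, 0, c 3 0])
  · exact fin4_of (by simp) i1.le i2.le i3.le
  · exact fin4_of (le_of_eq (by simp; ring)) i4.le i5.le (by simp)
  · exact fin4_of (by simp) (if_neg i1.ne').symm (if_neg i2.ne').symm (if_neg i3.ne').symm
  · refine fin4_of ?_ (if_neg i4.ne').symm (if_neg i5.ne').symm (by simp)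
    rw [if_pos]
    · rfl
    · simp; ring
  · intro z hz
    obtain ⟨h0, h1, h2, h3⟩ := hS' z hz
    rw [pow_one] at h3
    refine ⟨h1, ?_, ?_, ?_⟩
    · simp [Fin.sum_univ_four, h2, e1]
    · simp [Fin.sum_univ_four]
      rw [h3]
      field_simp
      ring
    · simp [Fin.sum_univ_four, h0, h1, c1]

theorem fam2 {E d n₁ n₂ : ℕ} (hE : 1 < E) (hd : d = E + 1) (hn₁ : 1 < n₁) (hn₂ : 1 < n₂)
    {e c : Fin 4 → Cn 2 → ℂ}
    (he : ∀ j, AnalyticAt ℂ (e j) 0) (hc : ∀ j, AnalyticAt ℂ (c j) 0)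
    (c1 : c 0 0 ≠ 0) (c2 : c 1 0 ≠ 0) (e1 : e 0 0 + e 1 0 * (- c 0 0 / c 1 0) ≠ 0) :
    Fam (ft d n₁ n₂ e c) ((d * n₁ + 1) * n₂) (n₂ * (d * n₁ + 1)) (E * n₁) (E * n₁) := by
  obtain ⟨S, hS, hS'⟩ := exists_pairs (M := d * n₁ + 1) (k := n₂) (by omega) (by omega)
    (η := (e 0 0 + e 1 0 * (- c 0 0 / c 1 0))⁻¹) (inv_ne_zero e1)
    (fun x => - c 0 0 / c 1 0 * x ^ (E * n₁))
    (fun x hx => mul_ne_zero (div_ne_zero (neg_ne_zero.2 c1) c2) (pow_ne_zero _ hx))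
  obtain ⟨i1, i2, i3, i4⟩ := ineq2 hE hd hn₁ hn₂
  rw [← hS]
  apply fam_mono he hc (a := n₂) (b := E * n₁) (β := d * n₁ * n₂ + E * n₁) (by omega)
    (by positivity) (by positivity)
    (A := ![e 0 0, e 1 0, 0, 0]) (B := ![c 0 0, c 1 0, 0, 0])
  · exact fin4_of (by simp) (le_of_eq (by simp [hd]; ring)) i1.le i2.le
  · exact fin4_of (le_of_eq (by simp; ring)) (le_of_eq (by simp [hd]; ring)) i3.le i4.le
  · exact fin4_of (by simp) (if_pos (by simp [hd]; ring)).symm (if_neg i1.ne').symm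
      (if_neg i2.ne').symm
  · exact fin4_of (if_pos (by simp; ring)).symm (if_pos (by simp [hd]; ring)).symm
      (if_neg i3.ne').symm (if_neg i4.ne').symm
  · intro z hz
    obtain ⟨h0, h1, h2, h3⟩ := hS' z hz
    have hB : c 0 0 * (z 0 ^ (d * n₁) * z 1) + c 1 0 * (z 0 ^ n₁ * z 1 ^ (n₂ + 1)) = 0 := by
      rw [pow_succ, h3, hd]
      field_simp
      ring
    refine ⟨h1, ?_, ?_, ?_⟩
    · simp [Fin.sum_univ_four]
      rw [h3]
      calc _ = (e 0 0 + e 1 0 * (- c 0 0 / c 1 0)) * z 0 ^ (d * n₁ + 1) := by rw [hd]; ring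
        _ = 1 := by rw [h2]; exact mul_inv_cancel₀ e1
    · simpa [Fin.sum_univ_four] using hB
    · simp [Fin.sum_univ_four]
      have : c 0 0 * (z 0 ^ (d * n₁) * z 1) + (n₂ + 1) * (c 1 0 * (z 0 ^ n₁ * z 1 ^ (n₂ + 1)))
        = n₂ * (c 1 0 * (z 0 ^ n₁ * z 1 ^ (n₂ + 1))) := by linear_combination hB
      rw [this]
      have : (n₂ : ℂ) ≠ 0 := by exact_mod_cast (by omega)
      positivity

theorem fam3 {E d n₁ n₂ : ℕ} (hE : 1 < E) (hd : d = E + 1) (hn₁ : 1 < n₁) (hn₂ : 1 < n₂)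
    {e c : Fin 4 → Cn 2 → ℂ}
    (he : ∀ j, AnalyticAt ℂ (e j) 0) (hc : ∀ j, AnalyticAt ℂ (c j) 0)
    (c3 : c 2 0 ≠ 0) (c2 : c 1 0 ≠ 0) (e3 : e 1 0 * (- c 2 0 / c 1 0) + e 2 0 ≠ 0) :
    Fam (ft d n₁ n₂ e c) (E * n₂ + d * n₁ * n₂) (E * n₂ + d * n₁ * n₂) n₁ n₁ := by
  have hκ : - c 2 0 / c 1 0 ≠ 0 := div_ne_zero (neg_ne_zero.2 c3) c2
  have hM : 0 < E * n₂ + d * n₁ * n₂ := by positivity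
  obtain ⟨κ, hκe⟩ : ∃ κ, κ = - c 2 0 / c 1 0 := ⟨_, rfl⟩
  obtain ⟨η, hη⟩ : ∃ η, η = (e 1 0 * κ + e 2 0)⁻¹ := ⟨_, rfl⟩
  rw [← hκe] at e3 hκ
  have hη0 : η ≠ 0 := by rw [hη]; exact inv_ne_zero e3
  obtain ⟨T, hT, hT'⟩ := exists_roots hM (η := η ^ n₁ / κ) (by positivity)
  obtain ⟨i1, i2, i3, i4⟩ := ineq3 hE hd hn₁ hn₂
  have hS : (T.image fun y => (![η / y ^ (d * n₂), y] : Cn 2)).card = E * n₂ + d * n₁ * n₂ := by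
    rw [Finset.card_image_of_injective, hT]
    intro y y' h
    simpa using congrFun h 1
  nth_rw 1 [← hS]
  apply fam_mono he hc (a := E * n₂) (b := n₁) (β := n₁ * (d * n₂ + 1)) (by positivity)
    (by omega) hM
    (A := ![0, e 1 0, e 2 0, 0]) (B := ![0, c 1 0, c 2 0, 0])
  · exact fin4_of i1.le (le_of_eq (by simp [hd]; ring)) (le_of_eq (by simp; ring)) i2.le
  · exact fin4_of i3.le (le_of_eq (by simp [hd]; ring)) (by simp) i4.le
  · exact fin4_of (if_neg i1.ne').symm (if_pos (by simp [hd]; ring)).symm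
      (if_pos (by simp; ring)).symm (if_neg i2.ne').symm
  · exact fin4_of (if_neg i3.ne').symm (if_pos (by simp [hd]; ring)).symm (by simp)
      (if_neg i4.ne').symm
  · intro z hz
    obtain ⟨y, hy, rfl⟩ := Finset.mem_image.1 hz
    have h := hT' y hy
    have hy0 : y ≠ 0 := by
      rintro rfl
      rw [zero_pow hM.ne'] at h
      have : η ^ n₁ / κ ≠ 0 := by positivity
      exact this h.symm
    have hX : (η / y ^ (d * n₂)) ^ n₁ = κ * y ^ (E * n₂) := by
      rw [div_pow, div_eq_iff (by positivity)]
      calc η ^ n₁ = κ * (η ^ n₁ / κ) := by field_simp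
        _ = _ := by rw [← h]; ring
    obtain ⟨x, hx⟩ : ∃ x, x = η / y ^ (d * n₂) := ⟨_, rfl⟩
    rw [← hx] at hX ⊢
    have hxy : x * y ^ (d * n₂) = η := by rw [hx]; field_simp
    have hκ2 : c 1 0 * κ = - c 2 0 := by rw [hκe]; field_simp
    have hc1 : c 1 0 * (x ^ n₁ * y ^ (n₂ + 1)) = - (c 2 0 * y ^ (d * n₂ + 1)) := by
      rw [hX, hd]
      linear_combination y ^ (E * n₂) * y ^ (n₂ + 1) * hκ2
    refine ⟨by simpa using hy0, ?_, ?_, ?_⟩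
    · simp [Fin.sum_univ_four]
      rw [pow_succ x, hX]
      calc _ = (e 1 0 * κ + e 2 0) * (x * y ^ (d * n₂)) := by rw [hd]; ring
        _ = 1 := by rw [hxy, hη]; exact mul_inv_cancel₀ e3
    · simp [Fin.sum_univ_four]
      rw [hc1]; ring
    · simp [Fin.sum_univ_four]
      rw [hc1]
      have : ((n₂ : ℂ) + 1) * -(c 2 0 * y ^ (d * n₂ + 1)) +
        (d * n₂ + 1) * (c 2 0 * y ^ (d * n₂ + 1)) = E * n₂ * c 2 0 * y ^ (d * n₂ + 1) := by
        rw [hd]; push_cast; ring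
      rw [this]
      have k1 : (n₂ : ℂ) ≠ 0 := by exact_mod_cast (by omega)
      have k2 : (E : ℂ) ≠ 0 := by exact_mod_cast (by omega)
      positivity

theorem fam4 {n₁ n₂ : ℕ} (hn₁ : 1 < n₁) (hn₂ : 1 < n₂)
    {e c : Fin 4 → Cn 2 → ℂ}
    (he : ∀ j, AnalyticAt ℂ (e j) 0) (hc : ∀ j, AnalyticAt ℂ (c j) 0)
    (L : Fin 2 → ℂ) (hL : L 0 ≠ L 1) (hL0 : ∀ i, L i ≠ 0)
    (hr : ∀ i, c 0 0 + c 1 0 * L i + c 2 0 * L i ^ 2 = 0)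
    (hr' : ∀ i, c 1 0 + 2 * c 2 0 * L i ≠ 0)
    (e1 : ∀ i, e 0 0 + e 1 0 * L i + e 2 0 * L i ^ 2 ≠ 0) :
    Fam (ft 2 n₁ n₂ e c) (2 * ((2 * n₁ + 1) * n₂)) (n₂ * (2 * n₁ + 1)) n₁ n₁ := by
  have ex := fun i => exists_pairs (M := 2 * n₁ + 1) (k := n₂) (by omega) (by omega)
    (η := (e 0 0 + e 1 0 * L i + e 2 0 * L i ^ 2)⁻¹) (inv_ne_zero (e1 i))
    (fun x => L i * x ^ n₁)
    (by intro x hx; exact mul_ne_zero (hL0 i) (pow_ne_zero _ hx))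
  choose S hS hS' using ex
  obtain ⟨i1, i2⟩ := ineq4 hn₁ hn₂
  have dis : Disjoint (S 0) (S 1) := by
    rw [Finset.disjoint_left]
    intro z h0 h1
    obtain ⟨k0, -, -, a0⟩ := hS' 0 z h0
    obtain ⟨-, -, -, a1⟩ := hS' 1 z h1
    rw [a0] at a1
    exact hL (mul_right_cancel₀ (pow_ne_zero _ k0) a1)
  have hcard : (S 0 ∪ S 1).card = 2 * ((2 * n₁ + 1) * n₂) := by
    rw [Finset.card_union_of_disjoint dis, hS, hS]; ring
  rw [← hcard]
  apply fam_mono he hc (a := n₂) (b := n₁) (β := 2 * n₁ * n₂ + n₁) (by omega)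
    (by omega) (by positivity)
    (A := ![e 0 0, e 1 0, e 2 0, 0]) (B := ![c 0 0, c 1 0, c 2 0, 0])
  · exact fin4_of (by simp) (le_of_eq (by simp; ring)) (le_of_eq (by simp; ring)) i1.le
  · exact fin4_of (le_of_eq (by simp; ring)) (le_of_eq (by simp; ring)) (le_of_eq (by simp; ring))
      i2.le
  · exact fin4_of (by simp) (if_pos (by simp; ring)).symm (if_pos (by simp; ring)).symm
      (if_neg i1.ne').symm
  · exact fin4_of (if_pos (by simp; ring)).symm (if_pos (by simp; ring)).symm
      (if_pos (by simp; ring)).symm (if_neg i2.ne').symm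
  · intro z hz
    obtain ⟨i, hz⟩ : ∃ i, z ∈ S i := by
      rcases Finset.mem_union.1 hz with h | h
      exacts [⟨0, h⟩, ⟨1, h⟩]
    obtain ⟨h0, h1, h2, h3⟩ := hS' i z hz
    have hb1 : z 0 ^ n₁ * z 1 ^ (n₂ + 1) = L i * z 0 ^ (2 * n₁) * z 1 := by
      rw [pow_succ, h3]; ring
    have hb2 : z 1 ^ (2 * n₂ + 1) = L i ^ 2 * z 0 ^ (2 * n₁) * z 1 := by
      rw [pow_succ, mul_comm 2 n₂, pow_mul, h3]; ring
    refine ⟨h1, ?_, ?_, ?_⟩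
    · simp [Fin.sum_univ_four]
      rw [mul_comm 2 n₂, pow_mul, h3]
      calc _ = (e 0 0 + e 1 0 * L i + e 2 0 * L i ^ 2) * z 0 ^ (2 * n₁ + 1) := by ring
        _ = 1 := by rw [h2]; exact mul_inv_cancel₀ (e1 i)
    · simp [Fin.sum_univ_four]
      rw [hb1, hb2]
      linear_combination z 0 ^ (2 * n₁) * z 1 * hr i
    · simp [Fin.sum_univ_four]
      rw [hb1, hb2]
      have : c 0 0 * (z 0 ^ (2 * n₁) * z 1) + (n₂ + 1) * (c 1 0 * (L i * z 0 ^ (2 * n₁) * z 1)) +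
        (2 * n₂ + 1) * (c 2 0 * (L i ^ 2 * z 0 ^ (2 * n₁) * z 1)) =
        n₂ * L i * (c 1 0 + 2 * c 2 0 * L i) * (z 0 ^ (2 * n₁) * z 1) := by
        linear_combination z 0 ^ (2 * n₁) * z 1 * hr i
      rw [this]
      have k1 : (n₂ : ℂ) ≠ 0 := by exact_mod_cast (by omega)
      exact mul_ne_zero (mul_ne_zero (mul_ne_zero k1 (hL0 i)) (hr' i))
        (mul_ne_zero (pow_ne_zero _ h0) h1)



theorem avoid {Bad : Set ℂ} (hB : Bad.Finite) (w : ℂ) {ε : ℝ} (hε : 0 < ε) :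
    ∃ t : ℂ, ‖t‖ < ε ∧ w + t ∉ Bad := by
  have hd : Dense Badᶜ := hB.countable.dense_compl ℝ
  obtain ⟨v, hv, hvw⟩ := hd.exists_dist_lt w hε
  refine ⟨v - w, ?_, by simpa using hv⟩
  rwa [← dist_eq_norm, dist_comm]

theorem exists_perturb_gt {E d n₁ n₂ : ℕ} (hE : 1 < E) (hd : d = E + 1) (hn₁ : 1 < n₁)
    (hn₂ : 1 < n₂) {e c : Fin 4 → Cn 2 → ℂ}
    (he : ∀ j, AnalyticAt ℂ (e j) 0) (hc : ∀ j, AnalyticAt ℂ (c j) 0) {ε : ℝ} (hε : 0 < ε) :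
    ∃ t u : Fin 4 → ℂ, (∀ j, ‖t j‖ < ε) ∧ (∀ j, ‖u j‖ < ε) ∧ ∃ α l k, 0 < α ∧
      Fam (ft d n₁ n₂ (fun j z => e j z + t j) (fun j z => c j z + u j))
        (2 * d * n₁ * n₂ + d * n₁ + d * n₂ + 1) α l k := by
  have hu : ∀ j, ∃ t : ℂ, ‖t‖ < ε ∧ c j 0 + t ∉ ({0} : Set ℂ) := fun j =>
    avoid (Set.finite_singleton 0) _ hε
  choose u hu hu0 using hu
  simp only [mem_singleton_iff] at hu0
  obtain ⟨t0, ht0, ht0'⟩ := avoid (Set.toFinite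
    ({0, -(e 1 0 * (-(c 0 0 + u 0) / (c 1 0 + u 1)))} : Set ℂ)) (e 0 0) hε
  obtain ⟨t2, ht2, ht2'⟩ := avoid (Set.toFinite
    ({-(e 1 0 * (-(c 2 0 + u 2) / (c 1 0 + u 1)))} : Set ℂ)) (e 2 0) hε
  simp only [mem_insert_iff, mem_singleton_iff, not_or] at ht0' ht2'
  have he' : ∀ j, AnalyticAt ℂ (fun z => e j z + (![t0, 0, t2, 0] : Fin 4 → ℂ) j) 0 :=
    fun j => (he j).add analyticAt_const
  have hc' : ∀ j, AnalyticAt ℂ (fun z => c j z + u j) 0 := fun j => (hc j).add analyticAt_const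
  have F1 := fam1 (by omega : 1 < d) hn₁ hn₂ he' hc' (by simpa using ht0'.1) (hu0 0) (hu0 3)
  have F2 := fam2 hE hd hn₁ hn₂ he' hc' (hu0 0) (hu0 1) (by
    intro h; apply ht0'.2; simp at h; linear_combination h)
  have F3 := fam3 hE hd hn₁ hn₂ he' hc' (hu0 2) (hu0 1) (by
    intro h; apply ht2'; simp at h; linear_combination h)
  refine ⟨![t0, 0, t2, 0], u, ?_, hu, ?_⟩
  · exact fin4_of ht0 (by simpa using hε) ht2 (by simpa using hε)
  have i23 : n₁ * (n₂ * (d * n₁ + 1)) < (E * n₁) * (E * n₂ + d * n₁ * n₂) := by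
    subst hd
    obtain ⟨E, rfl⟩ := Nat.exists_eq_add_of_lt hE
    obtain ⟨n₁, rfl⟩ := Nat.exists_eq_add_of_lt hn₁
    obtain ⟨n₂, rfl⟩ := Nat.exists_eq_add_of_lt hn₂
    zify; rw [← sub_pos]; ring_nf; positivity
  have i12 : E * n₁ < n₂ * (d * n₁ + 1) := by
    subst hd
    obtain ⟨E, rfl⟩ := Nat.exists_eq_add_of_lt hE
    obtain ⟨n₁, rfl⟩ := Nat.exists_eq_add_of_lt hn₁
    obtain ⟨n₂, rfl⟩ := Nat.exists_eq_add_of_lt hn₂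
    zify; rw [← sub_pos]; ring_nf; positivity
  have p2 : 0 < n₂ * (d * n₁ + 1) := by positivity
  have p3 : 0 < E * n₂ + d * n₁ * n₂ := by positivity
  have F23 := F2.merge F3 p2 p3 i23 le_rfl le_rfl
  have F := F1.merge F23 (by positivity) (by positivity) (by
    calc E * n₁ * (E * n₂ + d * n₁ * n₂) * (d * n₁ + 1)
        < n₂ * (d * n₁ + 1) * (E * n₂ + d * n₁ * n₂) * (d * n₁ + 1) := by gcongr
      _ = _ := by ring) le_rfl i23.le
  have hcount : d * n₁ + 1 + ((d * n₁ + 1) * n₂ + (E * n₂ + d * n₁ * n₂))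
      = 2 * d * n₁ * n₂ + d * n₁ + d * n₂ + 1 := by subst hd; ring
  rw [hcount] at F
  exact ⟨_, _, _, by positivity, F⟩

theorem exists_perturb_two {n₁ n₂ : ℕ} (hn₁ : 1 < n₁)
    (hn₂ : 1 < n₂) {e c : Fin 4 → Cn 2 → ℂ}
    (he : ∀ j, AnalyticAt ℂ (e j) 0) (hc : ∀ j, AnalyticAt ℂ (c j) 0) {ε : ℝ} (hε : 0 < ε) :
    ∃ t u : Fin 4 → ℂ, (∀ j, ‖t j‖ < ε) ∧ (∀ j, ‖u j‖ < ε) ∧ ∃ α l k, 0 < α ∧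
      Fam (ft 2 n₁ n₂ (fun j z => e j z + t j) (fun j z => c j z + u j))
        (2 * 2 * n₁ * n₂ + 2 * n₁ + 2 * n₂ + 1) α l k := by
  obtain ⟨u0, hu0, hu0'⟩ := avoid (Set.finite_singleton 0) (c 0 0) hε
  obtain ⟨u2, hu2, hu2'⟩ := avoid (Set.finite_singleton 0) (c 2 0) hε
  obtain ⟨u3, hu3, hu3'⟩ := avoid (Set.finite_singleton 0) (c 3 0) hε
  obtain ⟨s, hs⟩ := IsAlgClosed.exists_pow_nat_eq (4 * (c 0 0 + u0) * (c 2 0 + u2)) two_pos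
  obtain ⟨u1, hu1, hu1'⟩ := avoid (Set.toFinite ({s, -s} : Set ℂ)) (c 1 0) hε
  simp only [mem_insert_iff, mem_singleton_iff, not_or] at hu0' hu1' hu2' hu3'
  obtain ⟨r, hr⟩ := IsAlgClosed.exists_pow_nat_eq
    ((c 1 0 + u1) ^ 2 - 4 * (c 0 0 + u0) * (c 2 0 + u2)) two_pos
  have hr0 : r ≠ 0 := by
    rintro rfl
    rw [← hs] at hr
    have : (c 1 0 + u1 - s) * (c 1 0 + u1 + s) = 0 := by linear_combination -hr
    rcases mul_eq_zero.1 this with h | h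
    · exact hu1'.1 (sub_eq_zero.1 h)
    · exact hu1'.2 (eq_neg_of_add_eq_zero_left h)
  let L : Fin 2 → ℂ := ![(-(c 1 0 + u1) + r) / (2 * (c 2 0 + u2)),
    (-(c 1 0 + u1) - r) / (2 * (c 2 0 + u2))]
  have hLr : ∀ i, (c 0 0 + u0) + (c 1 0 + u1) * L i + (c 2 0 + u2) * L i ^ 2 = 0 := by
    intro i
    fin_cases i
    · simp [L]; field_simp; linear_combination hr
    · simp [L]; field_simp; linear_combination hr
  have hLr' : ∀ i, (c 1 0 + u1) + 2 * (c 2 0 + u2) * L i ≠ 0 := by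
    intro i
    fin_cases i
    · have : (c 1 0 + u1) + 2 * (c 2 0 + u2) * L 0 = r := by simp [L]; field_simp; ring
      simpa [this] using hr0
    · have : (c 1 0 + u1) + 2 * (c 2 0 + u2) * L 1 = -r := by simp [L]; field_simp; ring
      simpa [this] using hr0
  have hL0 : ∀ i, L i ≠ 0 := by
    intro i hi
    have := hLr i
    rw [hi] at this
    apply hu0'; simpa using this
  have hL : L 0 ≠ L 1 := by
    intro h
    apply hr0
    simp [L] at h
    field_simp at h
    linear_combination h / 2
  obtain ⟨t0, ht0, ht0'⟩ := avoid (Set.toFinite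
    ({0, -(e 1 0 * L 0 + e 2 0 * L 0 ^ 2), -(e 1 0 * L 1 + e 2 0 * L 1 ^ 2)} : Set ℂ)) (e 0 0) hε
  simp only [mem_insert_iff, mem_singleton_iff, not_or] at ht0'
  have he' : ∀ j, AnalyticAt ℂ (fun z => e j z + (![t0, 0, 0, 0] : Fin 4 → ℂ) j) 0 :=
    fun j => (he j).add analyticAt_const
  have hc' : ∀ j, AnalyticAt ℂ (fun z => c j z + (![u0, u1, u2, u3] : Fin 4 → ℂ) j) 0 :=
    fun j => (hc j).add analyticAt_const
  have F1 := fam1 (by omega : 1 < 2) hn₁ hn₂ he' hc' (by simpa using ht0'.1) hu0' hu3'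
  have F4 := fam4 hn₁ hn₂ he' hc' L hL hL0 (by simpa using hLr) (by simpa using hLr') (by
    intro i h
    fin_cases i
    · apply ht0'.2.1; simp at h; linear_combination h
    · apply ht0'.2.2; simp at h; linear_combination h)
  refine ⟨![t0, 0, 0, 0], ![u0, u1, u2, u3], ?_, fin4_of hu0 hu1 hu2 hu3, ?_⟩
  · exact fin4_of ht0 (by simpa using hε) (by simpa using hε) (by simpa using hε)
  have p2 : 0 < n₂ * (2 * n₁ + 1) := by positivity
  have F := F1.merge F4 (by positivity) p2 (by
    rw [mul_comm]
    exact Nat.mul_lt_mul_of_pos_left (by nlinarith) (by positivity)) le_rfl le_rfl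
  have hcount : 2 * n₁ + 1 + (2 * ((2 * n₁ + 1) * n₂))
      = 2 * 2 * n₁ * n₂ + 2 * n₁ + 2 * n₂ + 1 := by ring
  rw [hcount] at F
  exact ⟨_, _, _, by positivity, F⟩

theorem exists_perturb {d n₁ n₂ : ℕ} (hd : 1 < d) (hn₁ : 1 < n₁)
    (hn₂ : 1 < n₂) {e c : Fin 4 → Cn 2 → ℂ}
    (he : ∀ j, AnalyticAt ℂ (e j) 0) (hc : ∀ j, AnalyticAt ℂ (c j) 0) {ε : ℝ} (hε : 0 < ε) :
    ∃ t u : Fin 4 → ℂ, (∀ j, ‖t j‖ < ε) ∧ (∀ j, ‖u j‖ < ε) ∧ ∃ α l k, 0 < α ∧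
      Fam (ft d n₁ n₂ (fun j z => e j z + t j) (fun j z => c j z + u j))
        (2 * d * n₁ * n₂ + d * n₁ + d * n₂ + 1) α l k := by
  rcases Nat.lt_or_ge 2 d with h | h
  · exact exists_perturb_gt (E := d - 1) (by omega) (by omega) hn₁ hn₂ he hc hε
  · obtain rfl : d = 2 := by omega
    exact exists_perturb_two hn₁ hn₂ he hc hε

theorem ms_analytic (p q : Fin 4 → ℕ) {e : Fin 4 → Cn 2 → ℂ} {x : Cn 2}
    (he : ∀ j, AnalyticAt ℂ (e j) x) : AnalyticAt ℂ (ms p q e) x := by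
  have hcoord : ∀ i : Fin 2, AnalyticAt ℂ (fun z : Cn 2 => z i) x := fun i =>
    (ContinuousLinearMap.proj (R := ℂ) i : Cn 2 →L[ℂ] ℂ).analyticAt x
  unfold ms
  apply Finset.analyticAt_fun_sum
  intro j _
  exact (((hcoord 0).pow _).mul ((hcoord 1).pow _)).mul (he j)

theorem ft_analytic (d n₁ n₂ : ℕ) {e c : Fin 4 → Cn 2 → ℂ} {x : Cn 2}
    (he : ∀ j, AnalyticAt ℂ (e j) x) (hc : ∀ j, AnalyticAt ℂ (c j) x) :
    AnalyticAt ℂ (ft d n₁ n₂ e c) x := by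
  rw [analyticAt_pi_iff]
  intro i
  fin_cases i
  · exact ms_analytic _ _ he
  · exact ms_analytic _ _ hc

theorem ms_diff (p q : Fin 4 → ℕ) (e : Fin 4 → Cn 2 → ℂ) (t : Fin 4 → ℂ) {ε : ℝ}
    (ht : ∀ j, ‖t j‖ < ε) {x : Cn 2} (hx : ‖x‖ ≤ 1) :
    ‖ms p q (fun j z => e j z + t j) x - ms p q e x‖ ≤ 4 * ε := by
  unfold ms
  rw [← Finset.sum_sub_distrib]
  refine (norm_sum_le _ _).trans ?_
  have : ∀ j ∈ Finset.univ, ‖x 0 ^ p j * x 1 ^ q j * (e j x + t j) - x 0 ^ p j * x 1 ^ q j * e j x‖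
      ≤ ε := by
    intro j _
    have e1 : x 0 ^ p j * x 1 ^ q j * (e j x + t j) - x 0 ^ p j * x 1 ^ q j * e j x
      = x 0 ^ p j * x 1 ^ q j * t j := by ring
    rw [e1, norm_mul, norm_mul, norm_pow, norm_pow]
    have h0 : ‖x 0‖ ^ p j ≤ 1 := pow_le_one₀ (norm_nonneg _) ((norm_le_pi_norm x 0).trans hx)
    have h1 : ‖x 1‖ ^ q j ≤ 1 := pow_le_one₀ (norm_nonneg _) ((norm_le_pi_norm x 1).trans hx)
    calc _ ≤ 1 * 1 * ε := by gcongr; exact (ht j).le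
      _ = ε := by ring
  refine (Finset.sum_le_card_nsmul _ _ _ this).trans ?_
  simp

theorem main_aux {d n₁ n₂ : ℕ} (hd : 1 < d) (hn₁ : 1 < n₁) (hn₂ : 1 < n₂)
    {f : Cn 2 → Cn 2} {e c : Fin 4 → Cn 2 → ℂ}
    (he : ∀ j, AnalyticAt ℂ (e j) 0) (hc : ∀ j, AnalyticAt ℂ (c j) 0)
    (hform : ∀ᶠ x in 𝓝 (0 : Cn 2), f x = ft d n₁ n₂ e c x) (hiso : IsolatedZeroAt0 f) :
    2 * d * n₁ * n₂ + d * n₁ + d * n₂ + 1 ≤ zeroOrder f 0 := by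
  have hfa : AnalyticAt ℂ f 0 := (ft_analytic d n₁ n₂ he hc).congr (hform.mono fun x hx => hx.symm)
  apply reduce hfa hiso
  intro ρ hρ
  have ev : ∀ᶠ x in 𝓝 (0 : Cn 2), f x = ft d n₁ n₂ e c x ∧ (∀ j, AnalyticAt ℂ (e j) x) ∧
      ∀ j, AnalyticAt ℂ (c j) x :=
    hform.and ((eventually_all.2 fun j => (he j).eventually_analyticAt).and
      (eventually_all.2 fun j => (hc j).eventually_analyticAt))
  obtain ⟨r₀, hr₀, hrr⟩ := Metric.nhds_basis_closedBall.eventually_iff.1 ev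
  refine ⟨min r₀ (min ρ 1), by positivity, (min_le_right _ _).trans (min_le_left _ _), ?_⟩
  set r := min r₀ (min ρ 1) with hr
  have hrpos : 0 < r := by positivity
  have hr1 : r ≤ 1 := (min_le_right _ _).trans (min_le_right _ _)
  have hsub : ∀ x ∈ closedBall (0 : Cn 2) r, x ∈ closedBall (0 : Cn 2) r₀ := fun x hx =>
    closedBall_subset_closedBall (min_le_left _ _) hx
  intro ε hε
  obtain ⟨t, u, ht, hu, α, l, k, hα, C, hC, hfam⟩ :=
    exists_perturb hd hn₁ hn₂ he hc (ε := ε / 16) (by positivity)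
  have hsm : ∀ᶠ σ : ℝ in 𝓝[>] 0, ‖(σ : ℂ) ^ α‖ < ε / 2 := by
    have cc : Continuous fun σ : ℝ => ‖(σ : ℂ) ^ α‖ := by fun_prop
    have := (cc.tendsto 0).mono_left (nhdsWithin_le_nhds (s := Ioi (0 : ℝ)))
    simp [hα.ne'] at this
    have h2 := this.eventually (Iio_mem_nhds (half_pos hε))
    simpa using h2
  obtain ⟨σ, ⟨T, hT, hTz⟩, hσ⟩ := ((hfam r hrpos).and hsm).exists
  have han : AnalyticOnNhd ℂ (ft d n₁ n₂ (fun j z => e j z + t j) (fun j z => c j z + u j))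
      (closedBall 0 r) := by
    intro x hx
    obtain ⟨-, h1, h2⟩ := hrr (hsub x hx)
    exact ft_analytic d n₁ n₂ (fun j => (h1 j).add analyticAt_const)
      (fun j => (h2 j).add analyticAt_const)
  refine ⟨fun x => ft d n₁ n₂ (fun j z => e j z + t j) (fun j z => c j z + u j) x
    - ![(σ : ℂ) ^ α, 0], fun x hx => (han x hx).sub analyticAt_const, ?_, T, hT.ge, ?_⟩
  · intro x hx
    have hx1 : ‖x‖ ≤ 1 := by
      have : ‖x‖ ≤ r := by simpa using hx
      exact this.trans hr1
    rw [(hrr (hsub x hx)).1, pi_norm_lt_iff hε]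
    intro i
    fin_cases i
    · have := ms_diff ![d * n₁ + 1, n₁ + 1, 1, 0] ![0, n₂, d * n₂, 2 * d * n₂ + 1] e t ht hx1
      simp only [ft, Pi.sub_apply, Fin.zero_eta, Matrix.cons_val_zero]
      rw [sub_right_comm]
      refine (norm_sub_le _ _).trans_lt ?_
      linarith
    · have := ms_diff ![d * n₁, n₁, 0, 2 * d * n₁ + 1] ![1, n₂ + 1, d * n₂ + 1, 0] c u hu hx1
      simp only [ft, Pi.sub_apply, Fin.mk_one, Matrix.cons_val_one, Matrix.cons_val_fin_one,
        sub_zero]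
      linarith
  · intro z hz
    obtain ⟨h1, h2, h3, -⟩ := hTz z hz
    have hzb : z ∈ ball (0 : Cn 2) r := by simpa using h3
    refine ⟨hzb, sub_eq_zero.2 h1, ?_⟩
    rwa [Jc_sub_const (han z (ball_subset_closedBall hzb))]

end Helpers

/-- Cronin-type estimate for the normal form appearing in case (b4): if `0` is an
isolated zero of `f` of the displayed shape, then
`π_f(0) ≥ 2 d n₁ n₂ + d n₁ + d n₂ + 1`. -/
theorem zeroOrder_lemma_dd4 (d n₁ n₂ : ℕ) (hd : 1 < d) (hn₁ : 1 < n₁) (hn₂ : 1 < n₂)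
    (f : Cn 2 → Cn 2) (a₁₁ a₁₂ a₂₁ a₂₂ v₁ v₂ w₁ w₂ : Cn 2 → ℂ)
    (ha₁₁ : AnalyticAt ℂ a₁₁ 0) (ha₁₂ : AnalyticAt ℂ a₁₂ 0)
    (ha₂₁ : AnalyticAt ℂ a₂₁ 0) (ha₂₂ : AnalyticAt ℂ a₂₂ 0)
    (hv₁ : AnalyticAt ℂ v₁ 0) (hv₂ : AnalyticAt ℂ v₂ 0)
    (hw₁ : AnalyticAt ℂ w₁ 0) (hw₂ : AnalyticAt ℂ w₂ 0)
    (hform : ∀ᶠ x in 𝓝 (0 : Cn 2),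
      f x = ![x 0 ^ (d * n₁ + 1) * a₁₁ x + x 0 ^ (n₁ + 1) * x 1 ^ n₂ * v₁ x +
                x 0 * x 1 ^ (d * n₂) * w₁ x + x 1 ^ (2 * d * n₂ + 1) * a₁₂ x,
              x 0 ^ (d * n₁) * x 1 * v₂ x + x 0 ^ n₁ * x 1 ^ (n₂ + 1) * w₂ x +
                x 1 ^ (d * n₂ + 1) * a₂₂ x + x 0 ^ (2 * d * n₁ + 1) * a₂₁ x])
    (hiso : IsolatedZeroAt0 f) :
    2 * d * n₁ * n₂ + d * n₁ + d * n₂ + 1 ≤ zeroOrder f 0 := by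
  refine main_aux hd hn₁ hn₂ (e := ![a₁₁, v₁, w₁, a₁₂]) (c := ![v₂, w₂, a₂₂, a₂₁])
    (fin4_of ha₁₁ hv₁ hw₁ ha₁₂) (fin4_of hv₂ hw₂ ha₂₂ ha₂₁) ?_ hiso
  filter_upwards [hform] with x hx
  rw [hx]
  simp [ft, ms, Fin.sum_univ_four]

end ZhangPaper
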